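/- arXiv:math/0408394 — 3 statements merged into one kernel-verified Lean document; each statement's English description precedes it below -/
import Mathlib

section
/- Let A be a noetherian ring such that the localization A_p is equidimensional for every prime p. Then for every prime ideal P of the polynomial ring B = A[T], the localization B_P is equidimensional. -/
set_option synthInstance.maxHeartbeats 1000000
set_option maxHeartbeats 1000000

universe u

/-- A noetherian (local) ring is equidimensional if it has finite Krull dimension
and `dim (R ⧸ q) = dim R` for every minimal prime `q`. -/
def IsEquidimensionalRing (R : Type u) [CommRing R] : Prop :=
  ringKrullDim R < ⊤ ∧ ∀ q ∈ minimalPrimes R, ringKrullDim (R ⧸ q) = ringKrullDim R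

namespace LocEquidim

open Polynomial

/-- Heights of images under two surjections with the same kernel agree. -/
lemma height_map_eq {R S S' : Type*} [CommRing R] [CommRing S] [CommRing S']
    (f : R →+* S) (g : R →+* S') (hf : Function.Surjective f) (hg : Function.Surjective g)
    (h : RingHom.ker f = RingHom.ker g) (P : Ideal R) :
    (P.map f).height = (P.map g).height := by
  let e : S ≃+* S' := (RingHom.quotientKerEquivOfSurjective hf).symm.trans
    ((Ideal.quotEquivOfEq h).trans (RingHom.quotientKerEquivOfSurjective hg))
  have he : (e : S →+* S').comp f = g := by
    ext x
    simp [e, RingHom.quotientKerEquivOfSurjective_symm_apply]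
  rw [← RingEquiv.height_map e (P.map f), ← he, ← Ideal.map_map]
  rfl

lemma height_map_map_eq {R S : Type*} [CommRing R] [CommRing S]
    (f : R →+* S) (hf : Function.Surjective f) (I : Ideal R) (J : Ideal S) (hJ : J = I.map f)
    (h : RingHom.ker f ≤ I) (P : Ideal R) :
    ((P.map f).map (Ideal.Quotient.mk J)).height = (P.map (Ideal.Quotient.mk I)).height := by
  rw [Ideal.map_map]
  have hs : Function.Surjective ((Ideal.Quotient.mk J).comp f) := by
    rw [RingHom.coe_comp]
    exact Ideal.Quotient.mk_surjective.comp hf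
  refine height_map_eq _ _ hs Ideal.Quotient.mk_surjective ?_ P
  rw [← RingHom.comap_ker, Ideal.mk_ker, Ideal.mk_ker, hJ,
    Ideal.comap_map_of_surjective' _ hf]
  exact sup_eq_left.mpr h

lemma dim_quot {R : Type*} [CommRing R] (p q : Ideal R) [p.IsPrime] [q.IsPrime] (hqp : q ≤ p) :
    ringKrullDim (Localization.AtPrime p ⧸ q.map (algebraMap R (Localization.AtPrime p))) =
      ((p.map (Ideal.Quotient.mk q)).height : WithBot ℕ∞) := by
  have hp' : (p.map (Ideal.Quotient.mk q)).IsPrime := Ideal.isPrime_map_quotientMk_of_isPrime hqp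
  have hmem : ∀ x, Ideal.Quotient.mk q x ∈ p.map (Ideal.Quotient.mk q) ↔ x ∈ p := by
    intro x
    rw [← Ideal.mem_comap, Ideal.comap_map_of_surjective' _ Ideal.Quotient.mk_surjective,
      Ideal.mk_ker, sup_eq_left.mpr hqp]
  have hM : Algebra.algebraMapSubmonoid (R ⧸ q) p.primeCompl =
      (p.map (Ideal.Quotient.mk q)).primeCompl := by
    ext y
    constructor
    · rintro ⟨x, hx, rfl⟩
      exact fun h => hx ((hmem x).mp h)
    · intro hy
      obtain ⟨x, rfl⟩ := Ideal.Quotient.mk_surjective y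
      exact ⟨x, fun h => hy ((hmem x).mpr h), rfl⟩
  have : IsLocalization.AtPrime
      (Localization.AtPrime p ⧸ q.map (algebraMap R (Localization.AtPrime p)))
      (p.map (Ideal.Quotient.mk q)) := by
    unfold IsLocalization.AtPrime
    rw [← hM]
    infer_instance
  exact IsLocalization.AtPrime.ringKrullDim_eq_height _ _

lemma equidim_iff {R : Type u} [CommRing R] [IsNoetherianRing R] (p : Ideal R) [p.IsPrime] :
    IsEquidimensionalRing (Localization.AtPrime p) ↔
      ∀ q ∈ minimalPrimes R, q ≤ p → (p.map (Ideal.Quotient.mk q)).height = p.height := by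
  have hd := IsLocalization.AtPrime.ringKrullDim_eq_height p (Localization.AtPrime p)
  have hmin : ∀ Q : Ideal (Localization.AtPrime p), Q ∈ minimalPrimes (Localization.AtPrime p) ↔
      Q.under R ∈ minimalPrimes R := by
    intro Q
    have := IsLocalization.minimalPrimes_map p.primeCompl (Localization.AtPrime p) (⊥ : Ideal R)
    rw [Ideal.map_bot] at this
    exact Set.ext_iff.mp this Q
  constructor
  · rintro ⟨-, h⟩ q hq hqp
    have hqP : q.IsPrime := hq.isPrime
    have hdis : Disjoint (p.primeCompl : Set R) (q : Set R) :=
      Set.disjoint_left.mpr fun x hx hxq => hx (hqp hxq)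
    have hu := IsLocalization.under_map_of_isPrime_disjoint p.primeCompl
      (Localization.AtPrime p) hqP hdis
    have := h (q.map (algebraMap R (Localization.AtPrime p))) ((hmin _).mpr (hu.symm ▸ hq))
    rw [dim_quot p q hqp, hd] at this
    exact_mod_cast this
  · intro h
    refine ⟨?_, fun Q hQ => ?_⟩
    · rw [hd]
      exact WithBot.coe_lt_coe.mpr (Ideal.height_lt_top_of_isPrime (I := p))
    · have hQ' := (hmin Q).mp hQ
      have hQp : Q.IsPrime := hQ.isPrime
      have hqP : (Q.under R).IsPrime := hQ'.isPrime
      have hle : Q.under R ≤ p := by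
        have := Ideal.comap_mono (f := algebraMap R (Localization.AtPrime p))
          (IsLocalRing.le_maximalIdeal hQp.ne_top)
        exact this.trans (Localization.AtPrime.under_maximalIdeal (I := p)).le
      have h1 := dim_quot p (Q.under R) hle
      rw [IsLocalization.map_under p.primeCompl, h _ hQ' hle] at h1
      rw [h1, hd]

end LocEquidim

theorem polynomial_locally_equidimensional
    (A : Type u) [CommRing A] [IsNoetherianRing A]
    (hA : ∀ (p : Ideal A) [p.IsPrime], IsEquidimensionalRing (Localization.AtPrime p)) :
    ∀ (P : Ideal (Polynomial A)) [P.IsPrime],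
      IsEquidimensionalRing (Localization.AtPrime P) := by
  intro P hP
  rw [LocEquidim.equidim_iff]
  intro Q hQ hQP
  have hQp : Q.IsPrime := hQ.isPrime
  -- `Q` is extended from a minimal prime `q` of `A`
  obtain ⟨q, hq⟩ : ∃ q, q = Q.comap (Polynomial.C : A →+* Polynomial A) := ⟨_, rfl⟩
  have hqp : q.IsPrime := hq ▸ Ideal.comap_isPrime _ _
  have hext : ∀ q' : Ideal A, q'.IsPrime → q' ≤ q → q'.map Polynomial.C = Q := by
    intro q' hq' hle
    have hpr : (q'.map (Polynomial.C : A →+* Polynomial A)).IsPrime :=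
      inferInstance
    have hleQ : q'.map (Polynomial.C : A →+* Polynomial A) ≤ Q :=
      Ideal.map_le_iff_le_comap.mpr (hle.trans hq.le)
    exact le_antisymm hleQ (hQ.2 ⟨hpr, bot_le⟩ hleQ)
  have hqQ := hext q hqp le_rfl
  have hqmin : q ∈ minimalPrimes A := by
    refine ⟨⟨hqp, bot_le⟩, fun q' hq' hle => ?_⟩
    intro x hx
    have : Polynomial.C x ∈ q'.map (Polynomial.C : A →+* Polynomial A) := by
      rw [hext q' hq'.1 hle]
      rw [hq] at hx
      exact hx
    simpa using Ideal.mem_map_C_iff.mp this 0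
  -- the prime below `P`
  obtain ⟨p, hp⟩ : ∃ p, p = P.comap (Polynomial.C : A →+* Polynomial A) := ⟨_, rfl⟩
  have hpp : p.IsPrime := hp ▸ Ideal.comap_isPrime _ _
  have hlo : P.LiesOver p := ⟨hp⟩
  have hqlep : q ≤ p := by rw [hq, hp]; exact Ideal.comap_mono hQP
  have hAp := (LocEquidim.equidim_iff p).mp (hA p) q hqmin hqlep
  -- reduction modulo `q`
  let m : Polynomial A →+* Polynomial (A ⧸ q) := Polynomial.mapRingHom (Ideal.Quotient.mk q)
  have hm : Function.Surjective m := Polynomial.map_surjective _ Ideal.Quotient.mk_surjective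
  have hker : RingHom.ker m = q.map Polynomial.C := by
    simp only [m, Polynomial.ker_mapRingHom, Ideal.mk_ker]
  have hkerP : RingHom.ker m ≤ P := by rw [hker, hqQ]; exact hQP
  have hp' : (p.map (Ideal.Quotient.mk q)).IsPrime := Ideal.isPrime_map_quotientMk_of_isPrime hqlep
  have hP' : (P.map m).IsPrime := Ideal.map_isPrime_of_surjective hm hkerP
  have hlo' : (P.map m).LiesOver (p.map (Ideal.Quotient.mk q)) := by
    constructor
    apply Ideal.comap_injective_of_surjective _ Ideal.Quotient.mk_surjective
    rw [Ideal.comap_map_of_surjective' _ Ideal.Quotient.mk_surjective, Ideal.mk_ker,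
      sup_eq_left.mpr hqlep, Ideal.under, Ideal.comap_comap]
    have : (algebraMap (A ⧸ q) (Polynomial (A ⧸ q))).comp (Ideal.Quotient.mk q) =
        m.comp Polynomial.C := by
      ext x; simp [m]
    rw [this, ← Ideal.comap_comap, Ideal.comap_map_of_surjective' _ hm, sup_eq_left.mpr hkerP, hp]
  have e1 := Ideal.height_eq_height_add_of_liesOver_of_hasGoingDown p P
  have e2 := Ideal.height_eq_height_add_of_liesOver_of_hasGoingDown
    (p.map (Ideal.Quotient.mk q)) (P.map m)
  have e3 : (P.map (Ideal.Quotient.mk Q)).height = (P.map m).height :=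
    LocEquidim.height_map_eq _ _ Ideal.Quotient.mk_surjective hm
      (by rw [Ideal.mk_ker, hker, hqQ]) P
  have hJ : (p.map (Ideal.Quotient.mk q)).map (algebraMap (A ⧸ q) (Polynomial (A ⧸ q))) =
      (p.map (algebraMap A (Polynomial A))).map m := by
    rw [Ideal.map_map, Ideal.map_map]
    congr 1
    ext x; simp [m]
  have e4 : ((P.map m).map (Ideal.Quotient.mk
      ((p.map (Ideal.Quotient.mk q)).map (algebraMap (A ⧸ q) (Polynomial (A ⧸ q)))))).height =
      (P.map (Ideal.Quotient.mk (p.map (algebraMap A (Polynomial A))))).height := by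
    exact LocEquidim.height_map_map_eq m hm _ _ hJ
      (hker.le.trans (Ideal.map_mono hqlep)) P
  rw [e3, e2, e4, hAp, ← e1]
end

section
/- Let R be a noetherian ring, C• a bounded complex of flat R-modules, and suppose that all cohomology modules H^q(C•) are flat over R. Then for every R-module M and every q, the natural map H^q(C•) ⊗_R M → H^q(C• ⊗_R M) is an isomorphism. -/
set_option synthInstance.maxHeartbeats 1000000
set_option maxHeartbeats 1000000

universe u v w

open TensorProduct

theorem rTensor_injective_of_exact_flat_aux {R A B D : Type*} [CommRing R]
    [AddCommGroup A] [AddCommGroup B] [AddCommGroup D] [Module R A] [Module R B] [Module R D]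
    [Module.Flat R D] (g : A →ₗ[R] B) (f : B →ₗ[R] D) (hg : Function.Injective g)
    (hf : Function.Surjective f) (H : Function.Exact g f)
    (N : Type*) [AddCommGroup N] [Module R N] : Function.Injective (g.rTensor N) := by
  rw [← LinearMap.lTensor_inj_iff_rTensor_inj]
  exact LinearMap.lTensor_injective_of_exact_of_flat f hf g hg H N

theorem flat_of_exact_aux {R : Type u} {A : Type v} {B D : Type*} [CommRing R]
    [AddCommGroup A] [AddCommGroup B] [AddCommGroup D] [Module R A] [Module R B] [Module R D]
    [Module.Flat R B] [Module.Flat R D] (g : A →ₗ[R] B) (f : B →ₗ[R] D)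
    (hg : Function.Injective g)
    (hf : Function.Surjective f) (H : Function.Exact g f) : Module.Flat R A := by
  rw [Module.Flat.iff_rTensor_preserves_injective_linearMap]
  intro N N' _ _ _ _ h hh
  have h1 : Function.Injective (g.lTensor N) :=
    LinearMap.lTensor_injective_of_exact_of_flat f hf g hg H N
  have h2 : Function.Injective (h.rTensor B) :=
    Module.Flat.rTensor_preserves_injective_linearMap h hh
  have h3 : (g.lTensor N') ∘ₗ (h.rTensor A) = (h.rTensor B) ∘ₗ (g.lTensor N) := by
    rw [LinearMap.lTensor_comp_rTensor, LinearMap.rTensor_comp_lTensor]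
  have h4 : Function.Injective ((g.lTensor N') ∘ₗ (h.rTensor A)) := by
    rw [h3]; exact h2.comp h1
  exact Function.Injective.of_comp (f := g.lTensor N') h4

theorem exact_subtype_rangeRestrict_aux {R A B : Type*} [CommRing R]
    [AddCommGroup A] [AddCommGroup B] [Module R A] [Module R B] (f : A →ₗ[R] B) :
    Function.Exact (LinearMap.ker f).subtype f.rangeRestrict := by
  rw [LinearMap.exact_iff]; simp

/-- Let `R` be a noetherian ring and `C•` a bounded complex of flat `R`-modules (given by
modules `C i` with differentials `d i : C i → C (i+1)` squaring to zero, vanishing outside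
a bounded range) all of whose cohomology modules `H^q(C•) = ker (d q) / im (d (q-1))` are
flat over `R`.  Then for every `R`-module `M` and every degree, the natural map
`H^q(C•) ⊗_R M → H^q(C• ⊗_R M)` (determined by `[x] ⊗ m ↦ [x ⊗ m]`) is an isomorphism. -/
theorem cohomology_base_change_of_flat_cohomology
    (R : Type u) [CommRing R] [IsNoetherianRing R]
    (C : ℤ → Type v) [∀ i, AddCommGroup (C i)] [∀ i, Module R (C i)]
    (d : ∀ i, C i →ₗ[R] C (i + 1))
    (hdd : ∀ i, (d (i + 1)).comp (d i) = 0)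
    (hbdd : ∃ a b : ℤ, ∀ i, (i < a ∨ b < i) → Subsingleton (C i))
    (hflat : ∀ i, Module.Flat R (C i))
    (hHflat : ∀ i, Module.Flat R
      ((LinearMap.ker (d (i + 1))) ⧸
        (LinearMap.range (d i)).comap (LinearMap.ker (d (i + 1))).subtype))
    (M : Type w) [AddCommGroup M] [Module R M] (i : ℤ) :
    ∃ e : (((LinearMap.ker (d (i + 1))) ⧸
            (LinearMap.range (d i)).comap (LinearMap.ker (d (i + 1))).subtype) ⊗[R] M)
            ≃ₗ[R]
          ((LinearMap.ker (LinearMap.rTensor M (d (i + 1)))) ⧸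
            (LinearMap.range (LinearMap.rTensor M (d i))).comap
              (LinearMap.ker (LinearMap.rTensor M (d (i + 1)))).subtype),
      ∀ (x : LinearMap.ker (d (i + 1))) (m : M),
        e ((Submodule.Quotient.mk x) ⊗ₜ[R] m) =
          Submodule.Quotient.mk
            ⟨(x : C (i + 1)) ⊗ₜ[R] m, by
              simp [LinearMap.mem_ker, LinearMap.rTensor_tmul,
                LinearMap.mem_ker.mp x.2]⟩ := by
  classical
  have hle : ∀ j, LinearMap.range (d j) ≤ LinearMap.ker (d (j + 1)) := fun j =>
    LinearMap.range_le_ker_iff.mpr (hdd j)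
  have hex : ∀ j, Function.Exact (Submodule.inclusion (hle j))
      (((LinearMap.range (d j)).comap (LinearMap.ker (d (j + 1))).subtype).mkQ) := fun j => by
    rw [LinearMap.exact_iff, Submodule.ker_mkQ, Submodule.range_inclusion]
  have hker : ∀ j, Module.Flat R (LinearMap.range (d j)) →
      Module.Flat R (LinearMap.ker (d j)) := fun j hj => by
    have := hflat j
    exact flat_of_exact_aux _ _ (Submodule.subtype_injective _)
      (LinearMap.surjective_rangeRestrict (d j)) (exact_subtype_rangeRestrict_aux (d j))
  have hrange : ∀ j, Module.Flat R (LinearMap.range (d j)) := by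
    obtain ⟨a, b, hab⟩ := hbdd
    have key : ∀ n : ℕ, ∀ j : ℤ, b ≤ j + n → Module.Flat R (LinearMap.range (d j)) := by
      intro n
      induction n with
      | zero =>
        intro j hj
        have := hab (j + 1) (Or.inr (by push_cast at hj; omega))
        infer_instance
      | succ n ih =>
        intro j hj
        have h1 := hker (j + 1) (ih (j + 1) (by push_cast at hj; omega))
        have h2 := hHflat j
        exact flat_of_exact_aux _ _ (Submodule.inclusion_injective (hle j))
          (Submodule.mkQ_surjective _) (hex j)
    intro j
    exact key (b - j).toNat j (by omega)
  -- the kernel inclusion stays injective after tensoring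
  have hZ : ∀ j, Function.Injective ((LinearMap.ker (d j)).subtype.rTensor M) := fun j => by
    have := hrange j
    exact rTensor_injective_of_exact_flat_aux _ _ (Submodule.subtype_injective _)
      (LinearMap.surjective_rangeRestrict (d j)) (exact_subtype_rangeRestrict_aux (d j)) M
  have hB : Function.Injective ((LinearMap.range (d (i + 1))).subtype.rTensor M) := by
    have := hHflat (i + 1)
    have h1 : Function.Injective ((Submodule.inclusion (hle (i + 1))).rTensor M) :=
      rTensor_injective_of_exact_flat_aux _ _ (Submodule.inclusion_injective (hle (i + 1)))
          (Submodule.mkQ_surjective _) (hex (i + 1)) M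
    have h2 : (LinearMap.range (d (i + 1))).subtype =
      (LinearMap.ker (d (i + 1 + 1))).subtype ∘ₗ Submodule.inclusion (hle (i + 1)) := rfl
    rw [h2, LinearMap.rTensor_comp]
    exact (hZ _).comp h1
  have hkerT : LinearMap.ker ((d (i + 1)).rTensor M) =
      LinearMap.range ((LinearMap.ker (d (i + 1))).subtype.rTensor M) := by
    have h2 : d (i + 1) = (LinearMap.range (d (i + 1))).subtype ∘ₗ (d (i + 1)).rangeRestrict := rfl
    have h3 : LinearMap.ker ((d (i + 1)).rTensor M) =
        LinearMap.ker ((d (i + 1)).rangeRestrict.rTensor M) := by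
      conv_lhs => rw [h2, LinearMap.rTensor_comp]
      exact LinearMap.ker_comp_of_ker_eq_bot _ (LinearMap.ker_eq_bot.mpr hB)
    rw [h3]
    exact LinearMap.exact_iff.mp (rTensor_exact M (exact_subtype_rangeRestrict_aux (d (i + 1)))
      (LinearMap.surjective_rangeRestrict _))
  let φ : (LinearMap.ker (d (i + 1)) ⊗[R] M) ≃ₗ[R] LinearMap.ker ((d (i + 1)).rTensor M) :=
    (LinearEquiv.ofInjective _ (hZ (i + 1))).trans (LinearEquiv.ofEq _ _ hkerT.symm)
  have hφ : ∀ z, ((φ z : LinearMap.ker ((d (i + 1)).rTensor M)) : C (i + 1) ⊗[R] M) =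
      (LinearMap.ker (d (i + 1))).subtype.rTensor M z := fun z => rfl
  let f : C i →ₗ[R] LinearMap.ker (d (i + 1)) :=
    (Submodule.inclusion (hle i)) ∘ₗ (d i).rangeRestrict
  have hf : (LinearMap.ker (d (i + 1))).subtype ∘ₗ f = d i := rfl
  have hfex : Function.Exact f
      (((LinearMap.range (d i)).comap (LinearMap.ker (d (i + 1))).subtype).mkQ) := by
    rw [LinearMap.exact_iff, Submodule.ker_mkQ, ← Submodule.range_inclusion _ _ (hle i)]
    exact (LinearMap.range_comp_of_range_eq_top _ (LinearMap.range_rangeRestrict (d i))).symm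
  let e₁ := rTensor.equiv M hfex (Submodule.mkQ_surjective _)
  have hmap : (LinearMap.range (f.rTensor M)).map (φ : _ →ₗ[R] _) =
      (LinearMap.range (LinearMap.rTensor M (d i))).comap
              (LinearMap.ker (LinearMap.rTensor M (d (i + 1)))).subtype := by
    have hc : ∀ t, ((φ (f.rTensor M t) : LinearMap.ker ((d (i + 1)).rTensor M)) :
        C (i + 1) ⊗[R] M) = (d i).rTensor M t := fun t => by
      rw [hφ, ← LinearMap.comp_apply, ← LinearMap.rTensor_comp, hf]
    ext y
    constructor
    · rintro ⟨_, ⟨t, rfl⟩, rfl⟩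
      exact ⟨t, (hc t).symm⟩
    · rintro ⟨t, ht⟩
      exact ⟨_, ⟨t, rfl⟩, Subtype.ext ((hc t).trans ht)⟩
  let e₂ := Submodule.Quotient.equiv _ _ φ hmap
  refine ⟨e₁.symm.trans e₂, fun x m => ?_⟩
  have h1 : e₁ (Submodule.Quotient.mk (x ⊗ₜ[R] m)) = (Submodule.Quotient.mk x) ⊗ₜ[R] m := rfl
  rw [← h1, LinearEquiv.trans_apply, LinearEquiv.symm_apply_apply]
  rfl
end

section
/- Let A be a formally equidimensional (locally quasi-unmixed) noetherian local ring and h ∈ A a nonzerodivisor. Then every associated prime of the integral closure of the ideal hA is a minimal prime of hA. In particular, if B denotes the integral closure of A in its total quotient ring and is finite over A, then every associated prime of the A-ideal hB is minimal over hA. -/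
set_option synthInstance.maxHeartbeats 1000000
set_option maxHeartbeats 1000000

universe u v

open IsLocalRing Pointwise

/-- The integral closure of an ideal `I`: the ideal generated by all `x` satisfying an
equation `x^n + a₁ x^{n-1} + ⋯ + aₙ = 0` with `aᵢ ∈ Iⁱ` (the set of such `x` is already
an ideal, so the span is exactly the integral closure). -/
def Ideal.integralClosureOfIdeal {A : Type u} [CommRing A] (I : Ideal A) : Ideal A :=
  Ideal.span {x : A | ∃ n : ℕ, 0 < n ∧ ∃ a : ℕ → A,
    (∀ i, 1 ≤ i → i ≤ n → a i ∈ I ^ i) ∧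
    x ^ n + ∑ i ∈ Finset.Icc 1 n, a i * x ^ (n - i) = 0}


/-- sequential completeness with respect to one element -/
def SeqComplete {S : Type*} [CommRing S] (u : S) : Prop :=
  ∀ a : ℕ → S, ∃ t : ℕ → S, ∀ n, t n = a n + u * t (n + 1)

/-- sequential separatedness with respect to one element -/
def SeqSep {S : Type*} [CommRing S] (u : S) (M : Type*) [AddCommGroup M] [Module S M] : Prop :=
  ∀ m : ℕ → M, (∀ n, m n = u • m (n + 1)) → m 0 = 0

theorem finite_of_seqComplete {S : Type*} [CommRing S] {u : S} (hu : SeqComplete u)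
    {M : Type*} [AddCommGroup M] [Module S M] (hM : SeqSep u M)
    (N : Submodule S M) (hN : N.FG) (hsum : ∀ m : M, ∃ n ∈ N, ∃ m' : M, m = n + u • m') :
    Module.Finite S M := by
  obtain ⟨r, g, hg⟩ := Submodule.fg_iff_exists_fin_generating_family.1 hN
  have key : ∀ m : M, ∃ c : Fin r → S, ∃ m' : M, m = ∑ i, c i • g i + u • m' := by
    intro m
    obtain ⟨n, hn, m', rfl⟩ := hsum m
    rw [← hg, Submodule.mem_span_range_iff_exists_fun] at hn
    obtain ⟨c, rfl⟩ := hn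
    exact ⟨c, m', rfl⟩
  choose c φ hcφ using key
  refine ⟨Submodule.fg_iff_exists_fin_generating_family.2 ⟨r, g, ?_⟩⟩
  rw [eq_top_iff]
  intro m _
  let s : ℕ → M := fun n => φ^[n] m
  have hs : ∀ n, s (n + 1) = φ (s n) := fun n => Function.iterate_succ_apply' φ n m
  choose t ht using fun i : Fin r => hu (fun n => c (s n) i)
  have h0 := hM (fun n => s n - ∑ i, t i n • g i) (by
    intro n
    show s n - ∑ i, t i n • g i = u • (s (n + 1) - ∑ i, t i (n + 1) • g i)
    have e1 : ∑ i, t i n • g i = ∑ i, c (s n) i • g i + u • ∑ i, t i (n + 1) • g i := by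
      rw [Finset.smul_sum, ← Finset.sum_add_distrib]
      refine Finset.sum_congr rfl fun i _ => ?_
      rw [ht i n, add_smul, mul_smul]
    rw [e1, hs, smul_sub]
    nth_rewrite 1 [hcφ (s n)]
    abel)
  have : m = ∑ i, t i 0 • g i := sub_eq_zero.1 h0
  rw [this]
  exact Submodule.sum_mem _ fun i _ => Submodule.smul_mem _ _ (Submodule.subset_span ⟨i, rfl⟩)

theorem seqComplete_of_isAdicComplete {S : Type*} [CommRing S] (I : Ideal S) [IsAdicComplete I S]
    {u : S} (hu : u ∈ I) : SeqComplete u := by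
  intro a
  have hc : ∀ n, ∃ L : S, ∀ k, ∑ j ∈ Finset.range k, u ^ j * a (n + j) ≡ L [SMOD (I ^ k • ⊤ : Submodule S S)] := by
    intro n
    refine IsPrecomplete.prec inferInstance ?_
    intro k l hkl
    rw [SModEq.sub_mem, ← neg_sub, Submodule.neg_mem_iff]
    rw [← Finset.sum_Ico_eq_sub _ hkl]
    refine Submodule.sum_mem _ fun j hj => ?_
    rw [smul_eq_mul, Ideal.mul_top]
    exact Ideal.mul_mem_right _ _ (Ideal.pow_le_pow_right (Finset.mem_Ico.1 hj).1 (Ideal.pow_mem_pow hu j))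
  choose t ht using hc
  refine ⟨t, fun n => ?_⟩
  rw [← sub_eq_zero]
  refine (inferInstance : IsHausdorff I S).haus _ fun k => ?_
  rw [SModEq.zero, smul_eq_mul, Ideal.mul_top]
  have h1 := (SModEq.sub_mem.1 (ht n (k + 1)))
  have h2 := (SModEq.sub_mem.1 (ht (n + 1) k))
  rw [smul_eq_mul, Ideal.mul_top] at h1 h2
  rw [Finset.sum_range_succ'] at h1
  have h1' := Ideal.pow_le_pow_right (Nat.le_succ k) h1
  have h3 : t n - (a n + u * t (n + 1)) =
    u * (∑ j ∈ Finset.range k, u ^ j * a (n + 1 + j) - t (n + 1)) -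
      (∑ j ∈ Finset.range k, u ^ (j + 1) * a (n + (j + 1)) + u ^ 0 * a (n + 0) - t n) := by
    have : ∑ j ∈ Finset.range k, u ^ (j + 1) * a (n + (j + 1)) =
      u * ∑ j ∈ Finset.range k, u ^ j * a (n + 1 + j) := by
      rw [Finset.mul_sum]
      refine Finset.sum_congr rfl fun j _ => ?_
      rw [pow_succ, add_comm j 1, add_assoc]; ring
    rw [this]; simp; ring
  rw [h3]
  exact Ideal.sub_mem _ (Ideal.mul_mem_left _ _ h2) h1'

theorem SeqComplete.map {S T : Type*} [CommRing S] [CommRing T] {u : S} (hu : SeqComplete u)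
    (f : S →+* T) (hf : Function.Surjective f) : SeqComplete (f u) := by
  intro a
  choose b hb using fun n => hf (a n)
  obtain ⟨t, ht⟩ := hu b
  exact ⟨fun n => f (t n), fun n => by
    show f (t n) = a n + f u * f (t (n + 1))
    rw [ht n, map_add, map_mul, hb]⟩

theorem isNoetherianRing_of_seqComplete {S : Type*} [CommRing S] {x : S} (hx : SeqComplete x)
    (hS : SeqSep x S) [IsNoetherianRing (S ⧸ Ideal.span {x})] : IsNoetherianRing S := by
  refine IsNoetherianRing.of_prime fun P hP => ?_
  have hfg : (P.map (Ideal.Quotient.mk (Ideal.span {x}))).FG := IsNoetherian.noetherian _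
  obtain ⟨r, g, hg⟩ := Submodule.fg_iff_exists_fin_generating_family.1 hfg
  have hg' : ∀ i, ∃ y ∈ P, Ideal.Quotient.mk (Ideal.span {x}) y = g i := fun i =>
    (Ideal.mem_map_iff_of_surjective _ Ideal.Quotient.mk_surjective).1
      (hg ▸ Submodule.subset_span ⟨i, rfl⟩)
  choose y hyP hyg using hg'
  have key : ∀ p ∈ P, ∃ c : Fin r → S, ∃ s : S, p = ∑ i, c i * y i + x * s := by
    intro p hp
    have : Ideal.Quotient.mk (Ideal.span {x}) p ∈ Submodule.span _ (Set.range g) :=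
      hg ▸ Ideal.mem_map_of_mem _ hp
    rw [Submodule.mem_span_range_iff_exists_fun] at this
    obtain ⟨c, hc⟩ := this
    choose c' hc' using fun i => Ideal.Quotient.mk_surjective (c i)
    have : p - ∑ i, c' i * y i ∈ Ideal.span {x} := by
      rw [← Ideal.Quotient.eq, ← hc, map_sum]
      refine Finset.sum_congr rfl fun i _ => ?_
      rw [map_mul, hc', hyg, smul_eq_mul]
    obtain ⟨s, hs⟩ := Ideal.mem_span_singleton'.1 this
    exact ⟨c', s, by rw [mul_comm x s, hs]; ring⟩
  by_cases hxP : x ∈ P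
  · have : P = Ideal.span (Set.range y) ⊔ Ideal.span {x} := by
      apply le_antisymm
      · intro p hp
        obtain ⟨c, s, rfl⟩ := key p hp
        refine Submodule.add_mem_sup (Ideal.sum_mem _ fun i _ => Ideal.mul_mem_left _ _
          (Ideal.subset_span ⟨i, rfl⟩)) (Ideal.mul_mem_right _ _ (Ideal.mem_span_singleton_self x))
      · refine sup_le (Ideal.span_le.2 ?_) ((Ideal.span_singleton_le_iff_mem _).2 hxP)
        rintro _ ⟨i, rfl⟩
        exact hyP i
    rw [this]
    exact Submodule.FG.sup (Submodule.fg_span (Set.finite_range y)) (Submodule.fg_span_singleton x)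
  · refine Module.Finite.iff_fg.1 ?_
    refine finite_of_seqComplete hx ?_ (Submodule.span S (Set.range fun i => (⟨y i, hyP i⟩ : P)))
      (Submodule.fg_span (Set.finite_range _)) ?_
    · intro m hm
      exact Subtype.ext (hS (fun n => (m n : S)) fun n => congrArg Subtype.val (hm n))
    · rintro ⟨p, hp⟩
      obtain ⟨c, s, hcs⟩ := key p hp
      have h1 : ∑ i, c i * y i ∈ P := Ideal.sum_mem _ fun i _ => Ideal.mul_mem_left _ _ (hyP i)
      have h2 : x * s ∈ P := by
        have : x * s = p - ∑ i, c i * y i := by rw [hcs]; ring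
        rw [this]; exact Ideal.sub_mem _ hp h1
      have h3 : s ∈ P := (hP.mem_or_mem h2).resolve_left hxP
      refine ⟨∑ i, c i • (⟨y i, hyP i⟩ : P), Submodule.sum_mem _ fun i _ =>
        Submodule.smul_mem _ _ (Submodule.subset_span ⟨i, rfl⟩), ⟨s, h3⟩, ?_⟩
      apply Subtype.ext
      simp [hcs]

theorem adicCompletion_ideal_closed {A : Type u} [CommRing A] [IsNoetherianRing A]
    (I 𝔞 : Ideal A) (z : AdicCompletion I A)
    (hz : ∀ n, z ∈ 𝔞.map (algebraMap A (AdicCompletion I A)) ⊔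
      (I.map (algebraMap A (AdicCompletion I A))) ^ n) :
    z ∈ 𝔞.map (algebraMap A (AdicCompletion I A)) := by
  have hex := AdicCompletion.map_exact (I := I) (f := (Submodule.subtype 𝔞)) (g := Submodule.mkQ 𝔞)
    (Submodule.subtype_injective _) (LinearMap.exact_subtype_mkQ 𝔞) (Submodule.mkQ_surjective _)
  have hker : AdicCompletion.map I (Submodule.mkQ 𝔞) z = 0 := by
    ext n
    have h1 : ∀ w ∈ 𝔞.map (algebraMap A (AdicCompletion I A)),
        AdicCompletion.map I (Submodule.mkQ 𝔞) w = 0 := by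
      intro w hw
      refine Submodule.span_induction ?_ (map_zero _) (fun x y _ _ hx hy => by rw [map_add, hx, hy, add_zero])
        (fun a x _ hx => by rw [map_smul, hx, smul_zero]) hw
      rintro _ ⟨a, ha, rfl⟩
      have : algebraMap A (AdicCompletion I A) a = AdicCompletion.of I A a := rfl
      rw [this, AdicCompletion.map_of]
      have : 𝔞.mkQ a = 0 := (Submodule.Quotient.mk_eq_zero _).2 ha
      rw [this, map_zero]
    have h2 : ∀ w ∈ (I.map (algebraMap A (AdicCompletion I A))) ^ n,
        (AdicCompletion.map I (Submodule.mkQ 𝔞) w).val n = 0 := by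
      intro w hw
      rw [← Ideal.map_pow] at hw
      refine Submodule.span_induction ?_ (by simp) (fun x y _ _ hx hy => by simp [hx, hy])
        (fun a x _ hx => by rw [map_smul, AdicCompletion.smul_eval, hx, smul_zero]) hw
      rintro _ ⟨a, ha, rfl⟩
      have : algebraMap A (AdicCompletion I A) a = AdicCompletion.of I A a := rfl
      rw [this, AdicCompletion.map_of]
      simp only [AdicCompletion.of_apply]
      rw [Submodule.mkQ_apply, Submodule.Quotient.mk_eq_zero]
      have : 𝔞.mkQ a = a • 𝔞.mkQ 1 := by rw [← map_smul, smul_eq_mul, mul_one]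
      rw [this]
      exact Submodule.smul_mem_smul ha trivial
    obtain ⟨w1, hw1, w2, hw2, rfl⟩ := Submodule.mem_sup.1 (hz n)
    rw [map_add, h1 w1 hw1, zero_add, h2 w2 hw2]
    rfl
  obtain ⟨y, rfl⟩ := (hex z).1 hker
  obtain ⟨t, rfl⟩ := AdicCompletion.ofTensorProduct_surjective_of_finite I 𝔞 y
  clear hker hz hex
  induction t using TensorProduct.induction_on with
  | zero => simp
  | tmul r a =>
    rw [AdicCompletion.ofTensorProduct_tmul, map_smul, AdicCompletion.map_of]
    exact Ideal.mul_mem_left _ _ (Ideal.mem_map_of_mem _ a.2)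
  | add x y hx hy =>
    rw [map_add, map_add]
    exact Ideal.add_mem _ hx hy

theorem isNoetherianRing_adicCompletion (A : Type u) [CommRing A] [IsNoetherianRing A]
    [IsLocalRing A] : IsNoetherianRing (AdicCompletion (maximalIdeal A) A) := by
  set S := AdicCompletion (maximalIdeal A) A with hS
  have hm : maximalIdeal S = (maximalIdeal A).map (algebraMap A S) := AdicCompletion.maximalIdeal_eq_map
  -- downward induction on ideals
  suffices H : ∀ 𝔞 : Ideal A, IsNoetherianRing (S ⧸ 𝔞.map (algebraMap A S)) by
    have := H ⊥
    rw [Ideal.map_bot] at this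
    exact isNoetherianRing_of_ringEquiv _ (RingEquiv.quotientBot S)
  intro 𝔞
  induction 𝔞 using WellFoundedGT.induction with
  | ind 𝔞 ih =>
  by_cases hle : maximalIdeal A ≤ 𝔞
  · have : maximalIdeal S ≤ 𝔞.map (algebraMap A S) := hm ▸ Ideal.map_mono hle
    by_cases htop : 𝔞.map (algebraMap A S) = ⊤
    · rw [htop]
      have : Subsingleton (S ⧸ (⊤ : Ideal S)) := Ideal.Quotient.subsingleton_iff.2 rfl
      infer_instance
    · have : 𝔞.map (algebraMap A S) = maximalIdeal S := ((IsLocalRing.maximalIdeal.isMaximal S).eq_of_le htop this).symm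
      rw [this]
      exact inferInstanceAs (IsNoetherianRing (ResidueField S))
  · obtain ⟨x, hx, hxa⟩ := Set.not_subset.1 hle
    have ih' := ih (𝔞 ⊔ Ideal.span {x}) (by
      refine lt_of_le_of_ne le_sup_left fun h => hxa ?_
      rw [h]
      exact Ideal.mem_sup_right (Ideal.mem_span_singleton_self x))
    set T := S ⧸ 𝔞.map (algebraMap A S) with hT
    let x' : T := Ideal.Quotient.mk _ (algebraMap A S x)
    have hxS : algebraMap A S x ∈ maximalIdeal S := hm ▸ Ideal.mem_map_of_mem _ hx
    have hc : SeqComplete x' :=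
      (seqComplete_of_isAdicComplete (maximalIdeal S) hxS).map _ Ideal.Quotient.mk_surjective
    have hs : SeqSep x' T := by
      intro s hs
      obtain ⟨z, hz⟩ := Ideal.Quotient.mk_surjective (s 0)
      rw [← hz, Ideal.Quotient.eq_zero_iff_mem]
      refine adicCompletion_ideal_closed _ _ _ fun n => ?_
      have h1 : ∀ n, s 0 = x' ^ n * s n := by
        intro n
        induction n with
        | zero => simp
        | succ n ihn => rw [ihn, hs n, smul_eq_mul, pow_succ]; ring
      obtain ⟨w, hw⟩ := Ideal.Quotient.mk_surjective (s n)
      have h2 := h1 n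
      rw [← hz, ← hw, ← map_pow, ← map_mul, Ideal.Quotient.eq] at h2
      have : z = (z - algebraMap A S x ^ n * w) + algebraMap A S x ^ n * w := by ring
      rw [this]
      exact Submodule.add_mem_sup h2 (Ideal.mul_mem_right _ _ (Ideal.pow_mem_pow (hm ▸ hxS) n))
    have hq : IsNoetherianRing (T ⧸ Ideal.span {x'}) := by
      rw [Ideal.map_sup, Ideal.map_span, Set.image_singleton] at ih'
      have e := DoubleQuot.quotQuotEquivQuotSup (𝔞.map (algebraMap A S)) (Ideal.span {algebraMap A S x})
      rw [Ideal.map_span, Set.image_singleton] at e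
      exact isNoetherianRing_of_ringEquiv _ e.symm
    exact isNoetherianRing_of_seqComplete hc hs


theorem exists_baer_embedding {C : Type u} [CommRing C] (N : Type u) [AddCommGroup N] [Module C N] :
    ∃ (J : Type u) (_ : AddCommGroup J) (_ : Module C J) (ι : N →ₗ[C] J),
      Function.Injective ι ∧ Module.Baer C J := by
  let J := CategoryTheory.Injective.under (ModuleCat.of C N)
  refine ⟨J, inferInstance, inferInstance,
    (CategoryTheory.Injective.ι (ModuleCat.of C N)).hom, ?_, ?_⟩
  · exact (ModuleCat.mono_iff_injective _).1 inferInstance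
  · have : CategoryTheory.Injective (ModuleCat.of C J) := inferInstanceAs (CategoryTheory.Injective J)
    exact Module.Baer.of_injective (Module.injective_module_of_injective_object C J)

theorem exists_injective_hull {C : Type u} [CommRing C] [IsLocalRing C] :
    ∃ (E : Type u) (_ : AddCommGroup E) (_ : Module C E),
      Module.Baer C E ∧ Module.Finite C ((C ⧸ maximalIdeal C) →ₗ[C] E) ∧
      Nontrivial ((C ⧸ maximalIdeal C) →ₗ[C] E) := by
  obtain ⟨J, _, _, ι, hι, hJ⟩ := exists_baer_embedding (C := C) (C ⧸ maximalIdeal C)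
  let k0 : Submodule C J := LinearMap.range ι
  obtain ⟨E, hkE, hE⟩ := zorn_le_nonempty₀
    {E : Submodule C J | k0 ≤ E ∧ ∀ x ∈ E, x ≠ 0 → ∃ r : C, r • x ∈ k0 ∧ r • x ≠ 0} (by
      intro c hc hchain y hy
      refine ⟨sSup c, ⟨(hc hy).1.trans (le_sSup hy), ?_⟩, fun z hz => le_sSup hz⟩
      intro x hx hx0
      obtain ⟨z, hz, hxz⟩ := (Submodule.mem_sSup_of_directed ⟨y, hy⟩ hchain.directedOn).1 hx
      exact (hc hz).2 x hxz hx0) k0 ⟨le_rfl, fun x hx hx0 => ⟨1, by simpa using hx, by simpa using hx0⟩⟩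
  have hEess := hE.prop.2
  obtain ⟨L, -, hL⟩ := zorn_le_nonempty₀ {L : Submodule C J | ∀ x ∈ L, x ∈ E → x = 0} (by
      intro c hc hchain y hy
      refine ⟨sSup c, ?_, fun z hz => le_sSup hz⟩
      intro x hx hx0
      obtain ⟨z, hz, hxz⟩ := (Submodule.mem_sSup_of_directed ⟨y, hy⟩ hchain.directedOn).1 hx
      exact (hc hz) x hxz hx0) ⊥ (fun x hx _ => by simpa using hx)
  have hLprop := hL.prop
  have hLess : ∀ x : J, x ∉ L → ∃ r : C, ∃ e ∈ E, e ≠ 0 ∧ r • x - e ∈ L := by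
    intro x hx
    by_contra hcon
    push Not at hcon
    apply hx
    have : L ⊔ Submodule.span C {x} ≤ L := hL.le_of_ge (by
      intro y hy hyE
      by_contra hy0
      obtain ⟨l, hl, w, hw, rfl⟩ := Submodule.mem_sup.1 hy
      obtain ⟨r, rfl⟩ := Submodule.mem_span_singleton.1 hw
      refine hcon r _ hyE hy0 ?_
      have : r • x - (l + r • x) = -l := by abel
      rw [this]
      exact L.neg_mem hl) le_sup_left
    exact this (Submodule.mem_sup_right (Submodule.mem_span_singleton_self x))
  let j : E →ₗ[C] J ⧸ L := L.mkQ ∘ₗ E.subtype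
  have hj : Function.Injective j := by
    rw [injective_iff_map_eq_zero]
    rintro ⟨x, hx⟩ h0
    have : x ∈ L := (Submodule.Quotient.mk_eq_zero L).1 h0
    exact Subtype.ext (hLprop x this hx)
  obtain ⟨φ, hφ⟩ := hJ.extension_property j hj E.subtype
  have hφE : ∀ e : J, e ∈ E → φ (L.mkQ e) = e := fun e he => LinearMap.congr_fun hφ ⟨e, he⟩
  have hrange : LinearMap.range φ ≤ E := hE.le_of_ge (by
      refine ⟨fun x hx => ⟨L.mkQ x, hφE x (hkE hx)⟩, ?_⟩
      rintro _ ⟨y, rfl⟩ hy0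
      obtain ⟨x, rfl⟩ := Submodule.mkQ_surjective _ y
      have hxL : x ∉ L := fun h => hy0 (by rw [Submodule.mkQ_apply, (Submodule.Quotient.mk_eq_zero L).2 h, map_zero])
      obtain ⟨r, e, he, he0, hre⟩ := hLess x hxL
      have h1 : r • φ (L.mkQ x) = e := by
        rw [← map_smul, ← map_smul]
        have : L.mkQ (r • x) = L.mkQ e := (Submodule.Quotient.eq L).2 hre
        rw [this, hφE e he]
      obtain ⟨s, hs, hs0⟩ := hEess e he he0
      exact ⟨s * r, by rwa [mul_smul, h1], by rwa [mul_smul, h1]⟩) 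
      (fun x hx => ⟨L.mkQ x, hφE x hx⟩)
  let ρ : J →ₗ[C] E := LinearMap.codRestrict E (φ ∘ₗ L.mkQ) fun x => hrange ⟨_, rfl⟩
  have hρ : ∀ e : E, ρ e = e := fun e => Subtype.ext (hφE e e.2)
  refine ⟨E, inferInstance, inferInstance, ?_, ?_, ?_⟩
  · intro I g
    obtain ⟨g', hg'⟩ := hJ I (E.subtype ∘ₗ g)
    refine ⟨ρ ∘ₗ g', fun x hx => ?_⟩
    rw [LinearMap.comp_apply, hg' x hx]
    exact hρ _
  · have hone : ∀ f : (C ⧸ maximalIdeal C) →ₗ[C] E, ((f 1 : E) : J) ∈ k0 := by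
      intro f
      by_cases h0 : f 1 = 0
      · rw [h0]; exact k0.zero_mem
      · obtain ⟨r, hr, hr0⟩ := hEess (f 1) (f 1).2 (fun h => h0 (Subtype.ext h))
        have hru : IsUnit r := by
          by_contra hnu
          apply hr0
          have : r • (1 : C ⧸ maximalIdeal C) = 0 := by
            rw [Algebra.smul_def, mul_one]
            exact Ideal.Quotient.eq_zero_iff_mem.2 ((mem_maximalIdeal r).2 hnu)
          have h2 : r • f 1 = 0 := by rw [← map_smul, this, map_zero]
          exact congrArg Subtype.val h2
        obtain ⟨v, rfl⟩ := hru
        have := k0.smul_mem (↑v⁻¹ : C) hr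
        rwa [smul_smul, Units.inv_mul, one_smul] at this
    let ev : ((C ⧸ maximalIdeal C) →ₗ[C] E) →ₗ[C] k0 :=
      { toFun := fun f => ⟨(f 1 : E), hone f⟩
        map_add' := fun f g => rfl
        map_smul' := fun r f => rfl }
    have hev : Function.Injective ev := by
      intro f g hfg
      have h0 : ((f 1 : E) : J) = ((g 1 : E) : J) := congrArg (Subtype.val : k0 → J) hfg
      have h1 : f 1 = g 1 := Subtype.ext h0
      ext
      exact congrArg Subtype.val h1
    have : IsNoetherian C (C ⧸ maximalIdeal C) := by
      have : IsSimpleModule C (C ⧸ maximalIdeal C) := 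
        isSimpleModule_iff_isCoatom.2 (Ideal.isMaximal_def.1 inferInstance)
      infer_instance
    have : IsNoetherian C k0 := isNoetherian_of_surjective ι.rangeRestrict (LinearMap.range_eq_top.2 ι.surjective_rangeRestrict)
    exact Module.Finite.of_injective ev hev
  · refine ⟨ρ ∘ₗ ι, 0, fun h => ?_⟩
    have h1 := LinearMap.congr_fun h 1
    have h2 : ι 1 ∈ E := hkE ⟨1, rfl⟩
    have h3 : ρ (ι 1) = ⟨ι 1, h2⟩ := hρ ⟨ι 1, h2⟩
    have h4 : ι 1 = 0 := congrArg Subtype.val (h3.symm.trans h1)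
    rw [← map_zero ι] at h4
    exact one_ne_zero (hι h4)


namespace LocCoh
open CategoryTheory Abelian

noncomputable section

variable {C : Type u} [CommRing C] (I : Ideal C)

/-- the quotient by a power of the ideal -/
def Q (n : ℕ) : ModuleCat.{u} C := ModuleCat.of C (C ⧸ I ^ n)

def tr {n n' : ℕ} (h : n ≤ n') : Q I n' ⟶ Q I n :=
  ModuleCat.ofHom (Submodule.factor (Ideal.pow_le_pow_right h))

theorem tr_tr {a b c : ℕ} (h : a ≤ b) (h' : b ≤ c) : tr I h' ≫ tr I h = tr I (h.trans h') := by
  ext x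
  obtain ⟨x, rfl⟩ := Ideal.Quotient.mk_surjective x
  rfl

theorem tr_self {a : ℕ} : tr I (le_refl a) = 𝟙 _ := by
  ext x
  obtain ⟨x, rfl⟩ := Ideal.Quotient.mk_surjective x
  rfl

def step (i : ℕ) (N : ModuleCat.{u} C) (a b : ℕ) (h : a ≤ b) :
    Ext (Q I a) N i →ₗ[C] Ext (Q I b) N i :=
  Ext.bilinearCompOfLinear C (Q I b) (Q I a) N 0 i i (zero_add i) (Ext.mk₀ (tr I h))

theorem step_apply (i : ℕ) (N : ModuleCat.{u} C) (a b : ℕ) (h : a ≤ b) (x : Ext (Q I a) N i) :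
    step I i N a b h x = (Ext.mk₀ (tr I h)).comp x (zero_add i) := rfl

instance (i : ℕ) (N : ModuleCat.{u} C) :
    DirectedSystem (fun n => Ext (Q I n) N i) fun a b h => step I i N a b h where
  map_self a x := by
    rw [step_apply, tr_self, Ext.mk₀_id_comp]
  map_map a b c h h' x := by
    rw [step_apply, step_apply, step_apply, Ext.mk₀_comp_mk₀_assoc, tr_tr]

/-- local cohomology -/
def H (i : ℕ) (N : ModuleCat.{u} C) : Type u :=
  Module.DirectLimit (fun n => Ext (Q I n) N i) (step I i N)

instance (i : ℕ) (N : ModuleCat.{u} C) : AddCommGroup (H I i N) :=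
  inferInstanceAs (AddCommGroup (Module.DirectLimit _ _))
instance (i : ℕ) (N : ModuleCat.{u} C) : Module C (H I i N) :=
  inferInstanceAs (Module C (Module.DirectLimit _ _))

def H.of {i : ℕ} {N : ModuleCat.{u} C} (n : ℕ) : Ext (Q I n) N i →ₗ[C] H I i N :=
  Module.DirectLimit.of C ℕ (fun n => Ext (Q I n) N i) (step I i N) n

variable {I}

theorem H.exists_of {i : ℕ} {N : ModuleCat.{u} C} (z : H I i N) : ∃ n x, H.of I n x = z :=
  Module.DirectLimit.exists_of z

theorem H.of_step {i : ℕ} {N : ModuleCat.{u} C} {a b : ℕ} (h : a ≤ b) (x : Ext (Q I a) N i) :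
    H.of I b ((Ext.mk₀ (tr I h)).comp x (zero_add i)) = H.of I a x :=
  Module.DirectLimit.of_f

theorem H.of_eq_zero {i : ℕ} {N : ModuleCat.{u} C} {n : ℕ} {x : Ext (Q I n) N i}
    (h : H.of I n x = 0) : ∃ b, ∃ hb : n ≤ b, (Ext.mk₀ (tr I hb)).comp x (zero_add i) = 0 :=
  Module.DirectLimit.of.zero_exact h

def post (I : Ideal C) {i j a : ℕ} {N N' : ModuleCat.{u} C} (e : Ext N N' a) (h : i + a = j) :
    H I i N →ₗ[C] H I j N' :=
  Module.DirectLimit.map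
    (fun n => (Ext.bilinearCompOfLinear C (Q I n) N N' i a j h).flip e) (by
      intro n n' hn
      ext x
      show ((Ext.mk₀ (tr I hn)).comp x (zero_add i)).comp e h =
        (Ext.mk₀ (tr I hn)).comp (x.comp e h) (zero_add j)
      rw [Ext.comp_assoc]
      omega)

theorem post_of {i j a : ℕ} {N N' : ModuleCat.{u} C} (e : Ext N N' a) (h : i + a = j) (n : ℕ)
    (x : Ext (Q I n) N i) : post I e h (H.of I n x) = H.of I n (x.comp e h) :=
  Module.DirectLimit.map_apply_of _ _ _

theorem post_exact {i j k a b : ℕ} {N N' N'' : ModuleCat.{u} C} (e : Ext N N' a) (e' : Ext N' N'' b)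
    (h : i + a = j) (h' : j + b = k) {c : ℕ} (hc : a + b = c) (h0 : e.comp e' hc = 0)
    (hex : ∀ (X : ModuleCat.{u} C) (x : Ext X N' j), x.comp e' h' = 0 → ∃ y : Ext X N i, y.comp e h = x) :
    Function.Exact (post I e h) (post I e' h') := by
  intro z
  constructor
  · intro hz
    obtain ⟨n, x, rfl⟩ := H.exists_of z
    rw [post_of] at hz
    obtain ⟨n', hn, hx⟩ := H.of_eq_zero hz
    rw [← Ext.comp_assoc (h₁₂ := zero_add j) (h := by omega)] at hx
    obtain ⟨y, hy⟩ := hex _ _ hx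
    refine ⟨H.of I n' y, ?_⟩
    rw [post_of, hy, H.of_step]
  · rintro ⟨w, rfl⟩
    obtain ⟨n, x, rfl⟩ := H.exists_of w
    rw [post_of, post_of, Ext.comp_assoc (h₂₃ := hc) (h := by omega), h0, Ext.comp_zero, map_zero]

theorem H.torsion {i : ℕ} {N : ModuleCat.{u} C} (z : H I i N) :
    ∃ n, ∀ r ∈ I ^ n, r • z = 0 := by
  obtain ⟨n, x, rfl⟩ := H.exists_of z
  refine ⟨n, fun r hr => ?_⟩
  rw [← map_smul]
  have h1 : r • (𝟙 (Q I n)) = 0 := by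
    ext y
    obtain ⟨y, rfl⟩ := Ideal.Quotient.mk_surjective y
    exact Ideal.Quotient.eq_zero_iff_mem.2 (Ideal.mul_mem_right _ _ hr)
  have h2 : r • x = 0 := by
    rw [← Ext.mk₀_id_comp x, ← Ext.smul_comp, ← Ext.mk₀_smul, h1, Ext.mk₀_zero, Ext.zero_comp]
  rw [h2, map_zero]

/-- functoriality -/
def Hmap (I : Ideal C) (i : ℕ) {N N' : ModuleCat.{u} C} (f : N →ₗ[C] N') : H I i N →ₗ[C] H I i N' :=
  post I (Ext.mk₀ (ModuleCat.ofHom f)) (add_zero i)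

theorem Hmap_of (i : ℕ) {N N' : ModuleCat.{u} C} (f : N →ₗ[C] N') (n : ℕ) (x : Ext (Q I n) N i) :
    Hmap I i f (H.of I n x) = H.of I n (x.comp (Ext.mk₀ (ModuleCat.ofHom f)) (add_zero i)) :=
  post_of _ _ _ _

theorem Hmap_smul_id (i : ℕ) {N : ModuleCat.{u} C} (r : C) :
    Hmap I i (r • LinearMap.id : N →ₗ[C] N) = r • LinearMap.id := by
  ext z
  obtain ⟨n, x, rfl⟩ := H.exists_of z
  rw [Hmap_of, LinearMap.smul_apply, LinearMap.id_apply, ← map_smul, Ext.smul_eq_comp_mk₀]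
  rfl

theorem Hmap_comp (i : ℕ) {N N' N'' : ModuleCat.{u} C} (f : N →ₗ[C] N') (g : N' →ₗ[C] N'') :
    Hmap I i (g ∘ₗ f) = Hmap I i g ∘ₗ Hmap I i f := by
  ext z
  obtain ⟨n, x, rfl⟩ := H.exists_of z
  rw [LinearMap.comp_apply, Hmap_of, Hmap_of, Hmap_of, Ext.comp_assoc_of_second_deg_zero,
    Ext.mk₀_comp_mk₀]
  rfl


theorem shortExact {N N' N'' : ModuleCat.{u} C} (f : N →ₗ[C] N') (g : N' →ₗ[C] N'')
    (hf : Function.Injective f) (hg : Function.Surjective g) (hfg : Function.Exact f g) : (ShortComplex.mk (ModuleCat.ofHom f) (ModuleCat.ofHom g)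
    (ModuleCat.hom_ext hfg.linearMap_comp_eq_zero)).ShortExact :=
  ModuleCat.shortComplex_shortExact _ hfg hf hg

theorem Hmap_exact {N N' N'' : ModuleCat.{u} C} (f : N →ₗ[C] N') (g : N' →ₗ[C] N'')
    (hf : Function.Injective f) (hg : Function.Surjective g) (hfg : Function.Exact f g) (i : ℕ) : Function.Exact (Hmap I i f) (Hmap I i g) := by
  have hS := shortExact f g hf hg hfg
  refine post_exact _ _ _ _ (c := 0) (add_zero 0) ?_ ?_
  · rw [Ext.mk₀_comp_mk₀]
    have : ModuleCat.ofHom f ≫ ModuleCat.ofHom g = 0 := ModuleCat.hom_ext hfg.linearMap_comp_eq_zero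
    rw [this, Ext.mk₀_zero]
  · intro X x hx
    exact Ext.covariant_sequence_exact₂ X hS x hx

theorem Hdelta {N N' N'' : ModuleCat.{u} C} (f : N →ₗ[C] N') (g : N' →ₗ[C] N'')
    (hf : Function.Injective f) (hg : Function.Surjective g) (hfg : Function.Exact f g) (i : ℕ) : ∃ δ : H I i N'' →ₗ[C] H I (i + 1) N, 
    Function.Exact (Hmap I i g) δ ∧ Function.Exact δ (Hmap I (i + 1) f) := by
  have hS := shortExact f g hf hg hfg
  refine ⟨post I hS.extClass rfl, ?_, ?_⟩
  · refine post_exact _ _ _ _ (c := 1) (zero_add 1) hS.comp_extClass ?_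
    intro X x hx
    exact Ext.covariant_sequence_exact₃ X hS x rfl hx
  · refine post_exact _ _ _ _ (c := 1) (add_zero 1) hS.extClass_comp ?_
    intro X x hx
    exact Ext.covariant_sequence_exact₁ X hS x hx rfl

theorem Hmap_zero_injective {N N' : ModuleCat.{u} C} (f : N →ₗ[C] N') (hf : Function.Injective f) :
    Function.Injective (Hmap I 0 f) := by
  rw [injective_iff_map_eq_zero]
  intro z hz
  obtain ⟨n, x, rfl⟩ := H.exists_of z
  rw [Hmap_of] at hz
  obtain ⟨n', hn, hx⟩ := H.of_eq_zero hz
  rw [← Ext.comp_assoc (h₁₂ := zero_add 0) (h := by omega)] at hx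
  have : Mono (ModuleCat.ofHom f) := (ModuleCat.mono_iff_injective _).2 hf
  have := (injective_iff_map_eq_zero _).1
    (Ext.postcomp_mk₀_injective_of_mono (Q I n') (ModuleCat.ofHom f)) _ hx
  rw [← H.of_step hn, this, map_zero]


end

end LocCoh


namespace LocCoh
open CategoryTheory Abelian

noncomputable section

variable {C : Type u} [CommRing C]

theorem H_injective_subsingleton (I : Ideal C) (i : ℕ) (N : ModuleCat.{u} C) (hN : Module.Baer C N) :
    Subsingleton (H I (i + 1) N) := by
  have : Module.Injective C N := hN.injective
  have : Injective N := (Module.injective_iff_injective_object C N).1 this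
  refine ⟨fun x y => ?_⟩
  obtain ⟨n, x, rfl⟩ := H.exists_of x
  obtain ⟨n', y, rfl⟩ := H.exists_of y
  rw [Ext.eq_zero_of_injective x, Ext.eq_zero_of_injective y, map_zero, map_zero]

/-- elements killed by a power of the ideal -/
def Gam (I : Ideal C) (J : Type*) [AddCommGroup J] [Module C J] : Submodule C J where
  carrier := {x | ∃ n, ∀ r ∈ I ^ n, r • x = 0}
  add_mem' := by
    rintro x y ⟨n, hn⟩ ⟨n', hn'⟩
    refine ⟨max n n', fun r hr => ?_⟩
    rw [smul_add, hn r (Ideal.pow_le_pow_right (le_max_left _ _) hr),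
      hn' r (Ideal.pow_le_pow_right (le_max_right _ _) hr), add_zero]
  zero_mem' := ⟨0, fun r _ => smul_zero r⟩
  smul_mem' := by
    rintro c x ⟨n, hn⟩
    exact ⟨n, fun r hr => by rw [smul_comm, hn r hr, smul_zero]⟩

theorem mem_Gam {I : Ideal C} {J : Type*} [AddCommGroup J] [Module C J] {x : J} :
    x ∈ Gam I J ↔ ∃ n, ∀ r ∈ I ^ n, r • x = 0 := Iff.rfl

theorem baer_Gam [IsNoetherianRing C] (I : Ideal C) (J : Type u) [AddCommGroup J] [Module C J]
    (hJ : Module.Baer C J) : Module.Baer C (Gam I J) := by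
  intro 𝔞 g
  have h1 : ∃ n, ∀ r ∈ I ^ n, ∀ y : 𝔞, r • g y = 0 := by
    have hfg : (⊤ : Submodule C 𝔞).FG := IsNoetherian.noetherian _
    obtain ⟨s, hs⟩ := hfg
    have : ∀ y : 𝔞, ∃ n, ∀ r ∈ I ^ n, r • g y = 0 := by
      intro y
      obtain ⟨n, hn⟩ := (g y).2
      exact ⟨n, fun r hr => Subtype.ext (hn r hr)⟩
    choose n hn using this
    refine ⟨s.sup n, fun r hr y => ?_⟩
    have hy : y ∈ Submodule.span C (s : Set 𝔞) := hs ▸ trivial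
    induction hy using Submodule.span_induction with
    | mem x hx => exact hn x r (Ideal.pow_le_pow_right (Finset.le_sup hx) hr)
    | zero => simp
    | add x y _ _ hx hy => rw [map_add, smul_add, hx, hy, add_zero]
    | smul c x _ hx => rw [map_smul, smul_comm, hx, smul_zero]
  obtain ⟨n, hn⟩ := h1
  obtain ⟨k, hk⟩ := Ideal.exists_pow_inf_eq_pow_smul I (M := C) 𝔞
  let p : 𝔞 →ₗ[C] C ⧸ I ^ (n + k) := (I ^ (n + k)).mkQ ∘ₗ 𝔞.subtype
  have hp : LinearMap.ker p ≤ LinearMap.ker g := by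
    rintro ⟨y, hy⟩ hyp
    have h2 : y ∈ I ^ (n + k) := (Submodule.Quotient.mk_eq_zero _).1 hyp
    have h3 : y ∈ (I ^ (n + k) • ⊤ : Submodule C C) ⊓ 𝔞 := ⟨by simpa using h2, hy⟩
    rw [hk (n + k) (by omega), Nat.add_sub_cancel] at h3
    have h4 : y ∈ I ^ n • (𝔞 : Submodule C C) := Submodule.smul_mono le_rfl inf_le_right h3
    have h5 : ∀ z ∈ I ^ n • (𝔞 : Submodule C C), ∀ hz : z ∈ 𝔞, g ⟨z, hz⟩ = 0 := by
      intro z hz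
      induction hz using Submodule.smul_induction_on' with
      | smul r hr w hw =>
        intro hz
        have : (⟨r • w, hz⟩ : 𝔞) = r • ⟨w, hw⟩ := rfl
        rw [this, map_smul, hn r hr]
      | add x hx y hy ihx ihy =>
        intro hz
        have hx' : x ∈ 𝔞 := Submodule.smul_le_right hx
        have hy' : y ∈ 𝔞 := Submodule.smul_le_right hy
        have : (⟨x + y, hz⟩ : 𝔞) = ⟨x, hx'⟩ + ⟨y, hy'⟩ := rfl
        rw [this, map_add, ihx, ihy, add_zero]
    exact h5 y h4 hy
  let p' : (𝔞 ⧸ LinearMap.ker p) →ₗ[C] C ⧸ I ^ (n + k) := (LinearMap.ker p).liftQ p le_rfl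
  let g₁ : (𝔞 ⧸ LinearMap.ker p) →ₗ[C] J := (LinearMap.ker p).liftQ ((Gam I J).subtype ∘ₗ g) (by
    intro y hy
    have := hp hy
    rw [LinearMap.mem_ker] at this ⊢
    rw [LinearMap.comp_apply, this, map_zero])
  have hp' : Function.Injective p' := LinearMap.ker_eq_bot.1 (Submodule.ker_liftQ_eq_bot _ _ _ le_rfl)
  obtain ⟨G, hG⟩ := hJ.extension_property p' hp' g₁
  refine ⟨LinearMap.codRestrict _ (G ∘ₗ (I ^ (n + k)).mkQ) ?_, ?_⟩
  · intro c
    refine ⟨n + k, fun r hr => ?_⟩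
    rw [← map_smul]
    have : (I ^ (n + k)).mkQ (r • c) = 0 := (Submodule.Quotient.mk_eq_zero _).2 (Ideal.mul_mem_right _ _ hr)
    rw [LinearMap.comp_apply, this, map_zero]
  · intro x hx
    apply Subtype.ext
    exact LinearMap.congr_fun hG (Submodule.Quotient.mk ⟨x, hx⟩)

theorem Q_hom_apply (I : Ideal C) (n : ℕ) {N : ModuleCat.{u} C} (φ : Q I n ⟶ N) (c : C) :
    φ.hom (Ideal.Quotient.mk (I ^ n) c : C ⧸ I ^ n) =
      c • φ.hom (Ideal.Quotient.mk (I ^ n) 1 : C ⧸ I ^ n) := by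
  let φ' : C ⧸ I ^ n →ₗ[C] N := φ.hom
  show φ' _ = c • φ' _
  rw [← map_smul]
  congr 1
  rw [← Ideal.Quotient.mkₐ_eq_mk C, ← map_smul, smul_eq_mul, mul_one]

theorem Hmap_zero_surjective (I : Ideal C) {N N' : ModuleCat.{u} C} (g : N →ₗ[C] N')
    (hg : Function.Surjective g) (hN : Gam I N = ⊤) : Function.Surjective (Hmap I 0 g) := by
  intro z
  obtain ⟨n, x, rfl⟩ := H.exists_of z
  obtain ⟨φ, rfl⟩ := (Ext.mk₀_bijective _ _).2 x
  obtain ⟨y, hy⟩ := hg (φ (Ideal.Quotient.mk (I ^ n) 1))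
  obtain ⟨n', hn'⟩ : y ∈ Gam I N := hN ▸ trivial
  obtain ⟨b, hb, hb'⟩ : ∃ b, n ≤ b ∧ n' ≤ b := ⟨max n n', le_max_left _ _, le_max_right _ _⟩
  let ψ : C ⧸ I ^ b →ₗ[C] N := (I ^ b).liftQ (LinearMap.toSpanSingleton C N y) (by
    intro r hr
    exact hn' r (Ideal.pow_le_pow_right hb' hr))
  let ψ' : Q I b ⟶ N := ModuleCat.ofHom ψ
  refine ⟨H.of I b (Ext.mk₀ ψ'), ?_⟩
  rw [Hmap_of, ← H.of_step hb, Ext.mk₀_comp_mk₀, Ext.mk₀_comp_mk₀]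
  congr 2
  ext c
  obtain ⟨c, rfl⟩ := Ideal.Quotient.mk_surjective c
  have h1 : φ (Ideal.Quotient.mk (I ^ n) c) = c • φ (Ideal.Quotient.mk (I ^ n) 1) :=
    Q_hom_apply I n φ c
  show g (c • y) = φ (Ideal.Quotient.mk (I ^ n) c)
  rw [map_smul, hy, h1]

theorem Gam_quotient (I : Ideal C) (J : Type*) [AddCommGroup J] [Module C J] (hJ : Gam I J = ⊤)
    (L : Submodule C J) : Gam I (J ⧸ L) = ⊤ := by
  rw [eq_top_iff]
  intro x _
  obtain ⟨x, rfl⟩ := Submodule.mkQ_surjective L x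
  obtain ⟨n, hn⟩ : x ∈ Gam I J := hJ ▸ trivial
  exact ⟨n, fun r hr => by rw [← map_smul, hn r hr, map_zero]⟩

theorem exists_torsion_baer [IsNoetherianRing C] (I : Ideal C) (N : ModuleCat.{u} C)
    (hN : Gam I N = ⊤) : ∃ (J : ModuleCat.{u} C) (f : N →ₗ[C] J), Function.Injective f ∧
      Module.Baer C J ∧ Gam I J = ⊤ := by
  obtain ⟨J, _, _, ι, hι, hJ⟩ := exists_baer_embedding (C := C) N
  have hι' : ∀ x, ι x ∈ Gam I J := by
    intro x
    obtain ⟨n, hn⟩ : x ∈ Gam I N := hN ▸ trivial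
    exact ⟨n, fun r hr => by rw [← map_smul, hn r hr, map_zero]⟩
  refine ⟨ModuleCat.of C (Gam I J), LinearMap.codRestrict (Gam I J) ι hι', ?_, baer_Gam I J hJ, ?_⟩
  · intro x y hxy
    exact hι (congrArg Subtype.val hxy)
  · rw [eq_top_iff]
    rintro ⟨x, n, hn⟩ _
    exact ⟨n, fun r hr => Subtype.ext (hn r hr)⟩

theorem H_torsion_subsingleton [IsNoetherianRing C] (I : Ideal C) (i : ℕ) :
    ∀ (N : ModuleCat.{u} C), Gam I N = ⊤ → Subsingleton (H I (i + 1) N) := by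
  induction i with
  | zero =>
    intro N hN
    obtain ⟨J, f, hf, hJ, hJ'⟩ := exists_torsion_baer I N hN
    let J'' : ModuleCat.{u} C := ModuleCat.of C (J ⧸ LinearMap.range f)
    let g : J →ₗ[C] J'' := (LinearMap.range f).mkQ
    have hg : Function.Surjective g := Submodule.mkQ_surjective _
    obtain ⟨δ, h1, h2⟩ := Hdelta (I := I) f g hf hg (LinearMap.exact_map_mkQ_range f) 0
    have hs := Hmap_zero_surjective I g hg hJ'
    have := H_injective_subsingleton I 0 J hJ
    have h0 : ∀ x : H I (0 + 1) N, x = 0 := by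
      intro x
      obtain ⟨y, rfl⟩ := (h2 x).1 (Subsingleton.elim _ _)
      exact (h1 y).2 (hs y)
    exact ⟨fun x y => by rw [h0 x, h0 y]⟩
  | succ i ih =>
    intro N hN
    obtain ⟨J, f, hf, hJ, hJ'⟩ := exists_torsion_baer I N hN
    let J'' : ModuleCat.{u} C := ModuleCat.of C (J ⧸ LinearMap.range f)
    let g : J →ₗ[C] J'' := (LinearMap.range f).mkQ
    have hg : Function.Surjective g := Submodule.mkQ_surjective _
    obtain ⟨δ, h1, h2⟩ := Hdelta (I := I) f g hf hg (LinearMap.exact_map_mkQ_range f) (i + 1)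
    have := H_injective_subsingleton I (i + 1) J hJ
    have := ih J'' (Gam_quotient I J hJ' _)
    have h0 : ∀ x : H I (i + 1 + 1) N, x = 0 := by
      intro x
      obtain ⟨y, rfl⟩ := (h2 x).1 (Subsingleton.elim _ _)
      rw [Subsingleton.elim y 0, map_zero]
    exact ⟨fun x y => by rw [h0 x, h0 y]⟩

/-- local cohomology of the residue field in degree zero -/
theorem H_zero_residue [IsLocalRing C] :
    Nonempty (H (maximalIdeal C) 0 (ModuleCat.of C (C ⧸ maximalIdeal C)) ≃ₗ[C]
      (C ⧸ maximalIdeal C)) := by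
  let m := maximalIdeal C
  let k : ModuleCat.{u} C := ModuleCat.of C (C ⧸ m)
  let π : Q m 1 ⟶ k := ModuleCat.ofHom (Submodule.factor (by rw [pow_one]))
  have hπ : ∀ c : C, π (Ideal.Quotient.mk (m ^ 1) c) = Ideal.Quotient.mk m c := fun c => rfl
  let e : H m 0 k := H.of m 1 (Ext.mk₀ π)
  have he0 : e ≠ 0 := by
    intro h
    obtain ⟨b, hb, hx⟩ := H.of_eq_zero h
    rw [Ext.mk₀_comp_mk₀, Ext.mk₀_eq_zero_iff] at hx
    have h1 : (tr m hb ≫ π) (Ideal.Quotient.mk (m ^ b) 1) = Ideal.Quotient.mk m 1 := rfl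
    rw [hx] at h1
    have h2 : (Ideal.Quotient.mk m 1) = 0 := h1.symm
    rw [Ideal.Quotient.eq_zero_iff_mem] at h2
    exact (Ideal.ne_top_iff_one m).1 (IsLocalRing.maximalIdeal.isMaximal C).ne_top h2
  have hme : ∀ c ∈ m, c • e = 0 := by
    intro c hc
    have h1 : c • π = 0 := by
      ext y
      obtain ⟨y, rfl⟩ := Ideal.Quotient.mk_surjective y
      exact Ideal.Quotient.eq_zero_iff_mem.2 (Ideal.mul_mem_right _ _ hc)
    rw [← map_smul, ← Ext.mk₀_smul, h1, Ext.mk₀_zero, map_zero]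
  have hsurj : ∀ z : H m 0 k, ∃ c : C, c • e = z := by
    intro z
    obtain ⟨n, x, rfl⟩ := H.exists_of z
    rw [← H.of_step (Nat.le_succ n)]
    obtain ⟨φ, hφ⟩ := (Ext.mk₀_bijective _ _).2 ((Ext.mk₀ (tr m (Nat.le_succ n))).comp x (zero_add 0))
    rw [← hφ]
    obtain ⟨c, hc⟩ := Ideal.Quotient.mk_surjective (φ (Ideal.Quotient.mk (m ^ (n + 1)) 1) : C ⧸ m)
    refine ⟨c, ?_⟩
    have h1n : 1 ≤ n + 1 := by omega
    show c • H.of m 1 (Ext.mk₀ π) = H.of m (n + 1) (Ext.mk₀ φ)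
    rw [← H.of_step h1n, ← map_smul, Ext.mk₀_comp_mk₀, ← Ext.mk₀_smul]
    congr 2
    ext y
    obtain ⟨y, rfl⟩ := Ideal.Quotient.mk_surjective y
    have h1 : φ (Ideal.Quotient.mk (m ^ (n + 1)) y) = y • φ (Ideal.Quotient.mk (m ^ (n + 1)) 1) :=
      Q_hom_apply m (n + 1) φ y
    show Ideal.Quotient.mk m (c * y) = φ (Ideal.Quotient.mk (m ^ (n + 1)) y)
    rw [h1, ← hc]
    show _ = Ideal.Quotient.mk m (y * c)
    rw [mul_comm]
  let θ : (C ⧸ m) →ₗ[C] H m 0 k := Submodule.liftQ m (LinearMap.toSpanSingleton C _ e) hme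
  refine ⟨(LinearEquiv.ofBijective θ ⟨?_, ?_⟩).symm⟩
  · rw [injective_iff_map_eq_zero]
    intro c hc
    obtain ⟨c, rfl⟩ := Ideal.Quotient.mk_surjective c
    have hc' : c • e = 0 := hc
    rw [Ideal.Quotient.eq_zero_iff_mem]
    by_contra hcm
    have hu : IsUnit c := by
      by_contra hnu
      exact hcm ((mem_maximalIdeal c).2 hnu)
    exact he0 ((hu.smul_eq_zero).1 hc')
  · intro z
    obtain ⟨c, rfl⟩ := hsurj z
    exact ⟨Ideal.Quotient.mk m c, rfl⟩

end
end LocCoh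

/-- A contravariant homological functor with the properties of the Matlis dual of local cohomology. -/
structure DualTheory (C : Type u) [CommRing C] [IsLocalRing C] where
  F : ℕ → ModuleCat.{u} C → ModuleCat.{u} C
  map : ∀ (i : ℕ) {N N' : ModuleCat.{u} C}, (N →ₗ[C] N') → (F i N' →ₗ[C] F i N)
  map_smul_id : ∀ (i : ℕ) (N : ModuleCat.{u} C) (r : C),
    map i (r • LinearMap.id : N →ₗ[C] N) = r • LinearMap.id
  map_comp : ∀ (i : ℕ) {N N' N'' : ModuleCat.{u} C} (f : N →ₗ[C] N') (g : N' →ₗ[C] N''),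
    map i (g ∘ₗ f) = map i f ∘ₗ map i g
  exact_mid : ∀ (i : ℕ) {N N' N'' : ModuleCat.{u} C} (f : N →ₗ[C] N') (g : N' →ₗ[C] N''),
    Function.Injective f → Function.Surjective g → Function.Exact f g →
    Function.Exact (map i g) (map i f)
  exists_delta : ∀ (i : ℕ) {N N' N'' : ModuleCat.{u} C} (f : N →ₗ[C] N') (g : N' →ₗ[C] N''),
    Function.Injective f → Function.Surjective g → Function.Exact f g →
    ∃ δ : F (i + 1) N →ₗ[C] F i N'', Function.Exact (map (i + 1) f) δ ∧
      Function.Exact δ (map i g)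
  map_zero_surjective : ∀ {N N' : ModuleCat.{u} C} (f : N →ₗ[C] N'),
    Function.Injective f → Function.Surjective (map 0 f)
  sep : ∀ r ∈ maximalIdeal C, ∀ (i : ℕ) (N : ModuleCat.{u} C), SeqSep r (F i N)
  residue_succ : ∀ i, Subsingleton (F (i + 1) (ModuleCat.of C (C ⧸ maximalIdeal C)))
  residue_zero_finite : Module.Finite C (F 0 (ModuleCat.of C (C ⧸ maximalIdeal C)))
  residue_zero_nontrivial : Nontrivial (F 0 (ModuleCat.of C (C ⧸ maximalIdeal C)))

theorem baer_lcomp_exact {C : Type u} [CommRing C] {E X Y Z : Type*} [AddCommGroup E] [Module C E]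
    [AddCommGroup X] [Module C X] [AddCommGroup Y] [Module C Y] [AddCommGroup Z] [Module C Z]
    (hE : Module.Baer C E) (a : X →ₗ[C] Y) (b : Y →ₗ[C] Z) (h : Function.Exact a b) :
    Function.Exact (LinearMap.lcomp C E b) (LinearMap.lcomp C E a) := by
  intro φ
  constructor
  · intro hφ
    let b' := (LinearMap.ker b).liftQ b le_rfl
    have hb' : Function.Injective b' := LinearMap.ker_eq_bot.1 (Submodule.ker_liftQ_eq_bot _ _ _ le_rfl)
    obtain ⟨ψ, hψ⟩ := hE.extension_property b' hb' ((LinearMap.ker b).liftQ φ (by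
      intro y hy
      obtain ⟨x, rfl⟩ := (h y).1 hy
      exact LinearMap.congr_fun hφ x))
    refine ⟨ψ, ?_⟩
    ext y
    exact LinearMap.congr_fun hψ (Submodule.Quotient.mk y)
  · rintro ⟨ψ, rfl⟩
    ext x
    show ψ (b (a x)) = 0
    rw [h.apply_apply_eq_zero, map_zero]

open LocCoh in
theorem exists_dualTheory (C : Type u) [CommRing C] [IsLocalRing C] [IsNoetherianRing C] :
    Nonempty (DualTheory C) := by
  obtain ⟨E, _, _, hE, hfin, hnt⟩ := exists_injective_hull (C := C)
  let m := maximalIdeal C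
  refine ⟨{
    F := fun i N => ModuleCat.of C (H m i N →ₗ[C] E)
    map := fun i {N N'} f => LinearMap.lcomp C E (Hmap m i f)
    map_smul_id := ?_
    map_comp := ?_
    exact_mid := ?_
    exists_delta := ?_
    map_zero_surjective := ?_
    sep := ?_
    residue_succ := ?_
    residue_zero_finite := ?_
    residue_zero_nontrivial := ?_ }⟩
  · intro i N r
    ext φ : 1
    apply LinearMap.ext
    intro x
    rw [Hmap_smul_id]
    show φ (r • x) = r • φ x
    rw [map_smul]
  · intro i N N' N'' f g
    rw [Hmap_comp]
    rfl
  · intro i N N' N'' f g hf hg hfg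
    exact baer_lcomp_exact hE _ _ (Hmap_exact f g hf hg hfg i)
  · intro i N N' N'' f g hf hg hfg
    obtain ⟨δ, h1, h2⟩ := Hdelta (I := m) f g hf hg hfg i
    exact ⟨LinearMap.lcomp C E δ, baer_lcomp_exact hE _ _ h2, baer_lcomp_exact hE _ _ h1⟩
  · intro N N' f hf φ
    obtain ⟨ψ, hψ⟩ := hE.extension_property _ (Hmap_zero_injective (I := m) f hf) φ
    exact ⟨ψ, hψ⟩
  · intro r hr i N s hs
    have h1 : ∀ n, s 0 = r ^ n • s n := by
      intro n
      induction n with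
      | zero => simp
      | succ n ihn => rw [ihn, hs n, smul_smul, pow_succ]
    apply LinearMap.ext
    intro x
    obtain ⟨n, hn⟩ := H.torsion x
    rw [h1 n]
    show r ^ n • (s n) x = 0
    rw [← map_smul, hn _ (Ideal.pow_mem_pow hr n), map_zero]
  · intro i
    have := H_torsion_subsingleton m i (ModuleCat.of C (C ⧸ m)) (by
      rw [eq_top_iff]
      intro x _
      obtain ⟨x, rfl⟩ := Ideal.Quotient.mk_surjective x
      refine ⟨1, fun r hr => ?_⟩
      rw [pow_one] at hr
      exact Ideal.Quotient.eq_zero_iff_mem.2 (Ideal.mul_mem_right _ _ hr))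
    refine ⟨fun f g => LinearMap.ext fun x => ?_⟩
    rw [Subsingleton.elim x 0, map_zero, map_zero]
  · obtain ⟨e⟩ := H_zero_residue (C := C)
    exact Module.Finite.equiv (LinearEquiv.congrLeft E C e).symm
  · obtain ⟨e⟩ := H_zero_residue (C := C)
    exact (LinearEquiv.congrLeft E C e).symm.toEquiv.symm.nontrivial


namespace DualTheory

section
variable {C : Type u} [CommRing C] [IsLocalRing C] (D : DualTheory C)

/-- unbundled version of the dual functor -/
abbrev G (i : ℕ) (N : Type u) [AddCommGroup N] [Module C N] : Type u := D.F i (ModuleCat.of C N)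

/-- unbundled version of the map -/
def mp (i : ℕ) {N N' : Type u} [AddCommGroup N] [Module C N] [AddCommGroup N'] [Module C N']
    (f : N →ₗ[C] N') : D.G i N' →ₗ[C] D.G i N :=
  D.map i (N := ModuleCat.of C N) (N' := ModuleCat.of C N') f

theorem mp_smul_id (i : ℕ) (N : Type u) [AddCommGroup N] [Module C N] (r : C) :
    D.mp i (r • LinearMap.id : N →ₗ[C] N) = r • LinearMap.id :=
  D.map_smul_id i (ModuleCat.of C N) r

theorem mp_comp (i : ℕ) {N N' N'' : Type u} [AddCommGroup N] [Module C N] [AddCommGroup N']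
    [Module C N'] [AddCommGroup N''] [Module C N''] (f : N →ₗ[C] N') (g : N' →ₗ[C] N'') :
    D.mp i (g ∘ₗ f) = D.mp i f ∘ₗ D.mp i g :=
  D.map_comp i (N := ModuleCat.of C N) (N' := ModuleCat.of C N') (N'' := ModuleCat.of C N'') f g

theorem mp_exact (i : ℕ) {N N' N'' : Type u} [AddCommGroup N] [Module C N] [AddCommGroup N']
    [Module C N'] [AddCommGroup N''] [Module C N''] (f : N →ₗ[C] N') (g : N' →ₗ[C] N'')
    (hf : Function.Injective f) (hg : Function.Surjective g) (hfg : Function.Exact f g) :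
    Function.Exact (D.mp i g) (D.mp i f) :=
  D.exact_mid i (N := ModuleCat.of C N) (N' := ModuleCat.of C N') (N'' := ModuleCat.of C N'')
    f g hf hg hfg

theorem mp_delta (i : ℕ) {N N' N'' : Type u} [AddCommGroup N] [Module C N] [AddCommGroup N']
    [Module C N'] [AddCommGroup N''] [Module C N''] (f : N →ₗ[C] N') (g : N' →ₗ[C] N'')
    (hf : Function.Injective f) (hg : Function.Surjective g) (hfg : Function.Exact f g) :
    ∃ δ : D.G (i + 1) N →ₗ[C] D.G i N'', Function.Exact (D.mp (i + 1) f) δ ∧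
      Function.Exact δ (D.mp i g) :=
  D.exists_delta i (N := ModuleCat.of C N) (N' := ModuleCat.of C N') (N'' := ModuleCat.of C N'')
    f g hf hg hfg

theorem mp_zero_surjective {N N' : Type u} [AddCommGroup N] [Module C N] [AddCommGroup N']
    [Module C N'] (f : N →ₗ[C] N') (hf : Function.Injective f) :
    Function.Surjective (D.mp 0 f) :=
  D.map_zero_surjective (N := ModuleCat.of C N) (N' := ModuleCat.of C N') f hf

theorem mp_id (i : ℕ) (N : Type u) [AddCommGroup N] [Module C N] :
    D.mp i (LinearMap.id : N →ₗ[C] N) = LinearMap.id := by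
  have := D.mp_smul_id i N 1
  rwa [one_smul, one_smul] at this

theorem mp_equiv (i : ℕ) {N N' : Type u} [AddCommGroup N] [Module C N] [AddCommGroup N']
    [Module C N'] (e : N ≃ₗ[C] N') : Nonempty (D.G i N' ≃ₗ[C] D.G i N) := by
  refine ⟨LinearEquiv.ofLinearMap (D.mp i e.toLinearMap) (D.mp i e.symm.toLinearMap) ?_ ?_⟩
  · rw [← mp_comp]
    have : e.symm.toLinearMap ∘ₗ e.toLinearMap = LinearMap.id := by ext; simp
    rw [this, mp_id]
  · rw [← mp_comp]
    have : e.toLinearMap ∘ₗ e.symm.toLinearMap = LinearMap.id := by ext; simp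
    rw [this, mp_id]

theorem G_subsingleton_of_subsingleton (i : ℕ) (N : Type u) [AddCommGroup N] [Module C N]
    [Subsingleton N] : Subsingleton (D.G i N) := by
  have h := D.mp_smul_id i N 0
  have h' := D.mp_id i N
  have : (0 : C) • (LinearMap.id : N →ₗ[C] N) = LinearMap.id := by
    ext x; exact Subsingleton.elim _ _
  rw [this, h', zero_smul] at h
  exact ⟨fun x y => by
    have hx := LinearMap.congr_fun h x
    have hy := LinearMap.congr_fun h y
    simp only [LinearMap.id_apply, LinearMap.zero_apply] at hx hy
    rw [hx, hy]⟩

theorem G_smul_eq_zero (i : ℕ) (N : Type u) [AddCommGroup N] [Module C N] (r : C)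
    (hr : ∀ x : N, r • x = 0) (y : D.G i N) : r • y = 0 := by
  have h := D.mp_smul_id i N 0
  have h' := D.mp_smul_id i N r
  have : (0 : C) • (LinearMap.id : N →ₗ[C] N) = r • LinearMap.id := by
    ext x; simp [hr]
  rw [this, h', zero_smul] at h
  exact LinearMap.congr_fun h y

theorem subsingleton_of_smul_surjective {r : C} (hr : r ∈ maximalIdeal C) (i : ℕ) (N : Type u)
    [AddCommGroup N] [Module C N] (hs : ∀ x : D.G i N, ∃ y, r • y = x) :
    Subsingleton (D.G i N) := by
  choose f hf using hs
  have h0 : ∀ x : D.G i N, x = 0 := fun x =>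
    D.sep r hr i (ModuleCat.of C N) (fun n => f^[n] x) (fun n => by
      rw [Function.iterate_succ_apply', hf])
  exact ⟨fun x y => by rw [h0 x, h0 y]⟩

theorem exact_smul (u : C) (N : Type u) [AddCommGroup N] [Module C N] :
    Function.Exact (u • LinearMap.id : N →ₗ[C] N) (Submodule.mkQ (u • (⊤ : Submodule C N))) := by
  intro x
  rw [Submodule.mkQ_apply, Submodule.Quotient.mk_eq_zero]
  constructor
  · intro hx
    obtain ⟨y, -, rfl⟩ := (Submodule.mem_smul_pointwise_iff_exists _ _ _).1 hx
    exact ⟨y, rfl⟩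
  · rintro ⟨y, rfl⟩
    exact Submodule.smul_mem_pointwise_smul _ _ _ trivial

theorem delta_smul (i : ℕ) (u : C) (N : Type u) [AddCommGroup N] [Module C N]
    (hu : IsSMulRegular N u) :
    ∃ δ : D.G (i + 1) N →ₗ[C] D.G i (QuotSMulTop u N),
      (∀ x, δ x = 0 ↔ ∃ y, u • y = x) ∧
      Function.Exact δ (D.mp i (Submodule.mkQ (u • (⊤ : Submodule C N)))) := by
  obtain ⟨δ, h1, h2⟩ := D.mp_delta i (u • LinearMap.id : N →ₗ[C] N)
    (Submodule.mkQ (u • (⊤ : Submodule C N))) (fun _ _ h => hu h) (Submodule.mkQ_surjective _) (exact_smul u N)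
  rw [mp_smul_id] at h1
  exact ⟨δ, h1, h2⟩

end

section
variable {C : Type u} [CommRing C] [IsLocalRing C] [IsNoetherianRing C] (D : DualTheory C)

theorem isSMulRegular_of_equiv_prime {N : Type u} [AddCommGroup N] [Module C N] {p : Ideal C}
    (hp : p.IsPrime) (e : N ≃ₗ[C] C ⧸ p) {u : C} (hu : u ∉ p) : IsSMulRegular N u := by
  intro x y hxy
  apply e.injective
  have h : u • e x = u • e y := by rw [← map_smul, ← map_smul]; exact congrArg e hxy
  obtain ⟨a, ha⟩ := Ideal.Quotient.mk_surjective (e x)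
  obtain ⟨b, hb⟩ := Ideal.Quotient.mk_surjective (e y)
  rw [← ha, ← hb] at h ⊢
  have h' : Ideal.Quotient.mk p (u * a) = Ideal.Quotient.mk p (u * b) := h
  rw [Ideal.Quotient.eq] at h' ⊢
  rw [← mul_sub] at h'
  exact (hp.mem_or_mem h').resolve_left hu

theorem exists_mem_max_notMem {p : Ideal C} (hp : p.IsPrime) (h : p ≠ maximalIdeal C) :
    ∃ u ∈ maximalIdeal C, u ∉ p := by
  by_contra hcon
  push Not at hcon
  exact h (le_antisymm (le_maximalIdeal hp.ne_top) hcon)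

theorem G_finite [IsAdicComplete (maximalIdeal C) C] (i : ℕ) :
    ∀ (N : Type u) [AddCommGroup N] [Module C N] [Module.Finite C N],
      Module.Finite C (D.G i N) := by
  induction i using Nat.strong_induction_on with
  | _ i ih =>
  intro N _ _ hN
  refine IsNoetherianRing.induction_on_isQuotientEquivQuotientPrime C hN
    (motive := fun N _ _ _ => Module.Finite C (D.G i N)) ?_ ?_ ?_
  · intro N _ _ _ _
    have := D.G_subsingleton_of_subsingleton i N
    infer_instance
  · intro N _ _ _ p e
    by_cases hp : p.1 = maximalIdeal C
    · obtain ⟨e'⟩ := D.mp_equiv i e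
      have : Module.Finite C (D.G i (C ⧸ p.1)) := by
        rw [hp]
        cases i with
        | zero => exact D.residue_zero_finite
        | succ i =>
          have := D.residue_succ i
          infer_instance
      exact Module.Finite.equiv e'
    · obtain ⟨u, hu, hup⟩ := exists_mem_max_notMem p.2 hp
      have hreg := isSMulRegular_of_equiv_prime p.2 e hup
      cases i with
      | zero =>
        have hs := D.mp_zero_surjective (u • LinearMap.id : N →ₗ[C] N) (fun _ _ h => hreg h)
        rw [mp_smul_id] at hs
        have := D.subsingleton_of_smul_surjective hu 0 N hs
        infer_instance
      | succ i =>
        obtain ⟨δ, h1, h2⟩ := D.delta_smul i u N hreg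
        have hfin : Module.Finite C (D.G i (QuotSMulTop u N)) := ih i (Nat.lt_succ_self i) _
        have hr : (LinearMap.range δ).FG := IsNoetherian.noetherian _
        obtain ⟨r, g, hg⟩ := Submodule.fg_iff_exists_fin_generating_family.1 hr
        have : ∀ j, ∃ x, δ x = g j := fun j => by
          have : g j ∈ LinearMap.range δ := hg ▸ Submodule.subset_span ⟨j, rfl⟩
          exact this
        choose g' hg' using this
        refine finite_of_seqComplete (seqComplete_of_isAdicComplete (maximalIdeal C) hu)
          (D.sep u hu (i + 1) (ModuleCat.of C N)) (Submodule.span C (Set.range g'))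
          (Submodule.fg_span (Set.finite_range g')) ?_
        intro m
        have hm : δ m ∈ Submodule.map δ (Submodule.span C (Set.range g')) := by
          rw [Submodule.map_span, ← Set.range_comp]
          have : δ ∘ g' = g := funext hg'
          rw [this, hg]
          exact ⟨m, rfl⟩
        obtain ⟨n, hn, hn'⟩ := hm
        obtain ⟨y, hy⟩ := (h1 (m - n)).1 (by rw [map_sub, hn', sub_self])
        exact ⟨n, hn, y, by rw [hy]; abel⟩
  · intro N₁ _ _ _ N₂ _ _ _ N₃ _ _ _ f g hf hg hfg h1 h3
    have hex := D.mp_exact i f g hf hg hfg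
    have : IsNoetherian C (D.G i N₁) := inferInstance
    have : IsNoetherian C (D.G i N₃) := inferInstance
    have := isNoetherian_of_range_eq_ker _ _ hex.linearMap_ker_eq.symm
    infer_instance

theorem supportDim_quotSMulTop_lt {N : Type u} [AddCommGroup N] [Module C N] [Module.Finite C N]
    {u : C} (hreg : IsSMulRegular N u) (hu : u ∈ maximalIdeal C) (i : ℕ)
    (h : Module.supportDim C N < ((i + 1 : ℕ) : WithBot ℕ∞)) :
    Module.supportDim C (QuotSMulTop u N) < (i : WithBot ℕ∞) := by
  rw [← Module.supportDim_quotSMulTop_succ_eq_supportDim hreg hu] at h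
  push_cast at h
  rw [ENat.WithBot.lt_add_one_iff] at h
  exact ENat.WithBot.add_one_le_natCast_iff.1 h

theorem G_vanish (i : ℕ) :
    ∀ (N : Type u) [AddCommGroup N] [Module C N] [Module.Finite C N],
      Module.supportDim C N < (i : WithBot ℕ∞) → Subsingleton (D.G i N) := by
  induction i with
  | zero =>
    intro N _ _ _ h
    have h' : Module.supportDim C N = ⊥ := by
      by_contra hne
      rw [Nat.cast_zero] at h
      have := (Module.supportDim_ne_bot_iff_nontrivial C N).1 hne
      have : Nonempty (Module.support C N) := Module.nonempty_support_of_nontrivial.to_subtype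
      exact absurd h (not_lt.2 (Order.krullDim_nonneg))
    have := (Module.supportDim_eq_bot_iff_subsingleton C N).1 h'
    exact D.G_subsingleton_of_subsingleton 0 N
  | succ i ih =>
    intro N _ _ hN
    refine IsNoetherianRing.induction_on_isQuotientEquivQuotientPrime C hN
      (motive := fun N _ _ _ => Module.supportDim C N < ((i + 1 : ℕ) : WithBot ℕ∞) →
        Subsingleton (D.G (i + 1) N)) ?_ ?_ ?_
    · intro N _ _ _ _ _
      exact D.G_subsingleton_of_subsingleton (i + 1) N
    · intro N _ _ _ p e hdim
      by_cases hp : p.1 = maximalIdeal C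
      · obtain ⟨e'⟩ := D.mp_equiv (i + 1) e
        have : Subsingleton (D.G (i + 1) (C ⧸ p.1)) := by
          rw [hp]
          exact D.residue_succ i
        exact e'.symm.toEquiv.subsingleton
      · obtain ⟨u, hu, hup⟩ := exists_mem_max_notMem p.2 hp
        have hreg := isSMulRegular_of_equiv_prime p.2 e hup
        obtain ⟨δ, h1, h2⟩ := D.delta_smul i u N hreg
        have := ih (QuotSMulTop u N) (supportDim_quotSMulTop_lt hreg hu i hdim)
        exact D.subsingleton_of_smul_surjective hu (i + 1) N
          (fun x => (h1 x).1 (Subsingleton.elim _ _))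
    · intro N₁ _ _ _ N₂ _ _ _ N₃ _ _ _ f g hf hg hfg h1 h3 hdim
      have hex := D.mp_exact (i + 1) f g hf hg hfg
      have := h1 ((Module.supportDim_le_of_injective f hf).trans_lt hdim)
      have := h3 ((Module.supportDim_le_of_surjective g hg).trans_lt hdim)
      have h0 : ∀ x : D.G (i + 1) N₂, x = 0 := by
        intro x
        obtain ⟨y, rfl⟩ := (hex x).1 (Subsingleton.elim _ _)
        rw [Subsingleton.elim y 0, map_zero]
      exact ⟨fun x y => by rw [h0 x, h0 y]⟩

theorem mp_injective_of_surjective (e : ℕ) {N N' : Type u} [AddCommGroup N] [Module C N]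
    [Module.Finite C N] [AddCommGroup N'] [Module C N'] (g : N →ₗ[C] N')
    (hg : Function.Surjective g)
    (hdim : Module.supportDim C N < ((e + 1 : ℕ) : WithBot ℕ∞)) :
    Function.Injective (D.mp e g) := by
  obtain ⟨δ, h1, h2⟩ := D.mp_delta e (LinearMap.ker g).subtype g
    (LinearMap.ker g).injective_subtype hg (LinearMap.exact_subtype_ker_map g)
  have := D.G_vanish (e + 1) (LinearMap.ker g)
    ((Module.supportDim_le_of_injective _ (LinearMap.ker g).injective_subtype).trans_lt hdim)
  rw [injective_iff_map_eq_zero]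
  intro x hx
  obtain ⟨y, rfl⟩ := (h2 x).1 hx
  rw [Subsingleton.elim y 0, map_zero]

theorem smul_injective (e : ℕ) (N : Type u) [AddCommGroup N] [Module C N] [Module.Finite C N]
    (v : C) (hdim : Module.supportDim C N < ((e + 1 : ℕ) : WithBot ℕ∞))
    (hdim' : Module.supportDim C (QuotSMulTop v N) < (e : WithBot ℕ∞)) (x : D.G e N)
    (hx : v • x = 0) : x = 0 := by
  let f : N →ₗ[C] N := v • LinearMap.id
  have h1 := D.mp_injective_of_surjective e f.rangeRestrict f.surjective_rangeRestrict hdim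
  have h2 := D.mp_exact e (LinearMap.range f).subtype (Submodule.mkQ (v • (⊤ : Submodule C N)))
    (LinearMap.range f).injective_subtype (Submodule.mkQ_surjective _) (by
      intro y
      rw [exact_smul v N y]
      constructor
      · rintro ⟨z, rfl⟩; exact ⟨⟨f z, z, rfl⟩, rfl⟩
      · rintro ⟨⟨_, z, rfl⟩, rfl⟩; exact ⟨z, rfl⟩)
  have := D.G_vanish e (QuotSMulTop v N) hdim'
  have h3 : D.mp e f.rangeRestrict (D.mp e (LinearMap.range f).subtype x) = 0 := by
    rw [← LinearMap.comp_apply, ← mp_comp]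
    have : (LinearMap.range f).subtype ∘ₗ f.rangeRestrict = v • LinearMap.id := rfl
    rw [this, mp_smul_id]
    exact hx
  obtain ⟨y, rfl⟩ := (h2 x).1 ((injective_iff_map_eq_zero _).1 h1 _ h3)
  rw [Subsingleton.elim y 0, map_zero]

end

end DualTheory


theorem exists_mem_support_le_ringKrullDim {C : Type u} [CommRing C] {N : Type u} [AddCommGroup N]
    [Module C N] (i : ℕ) (h : (i : WithBot ℕ∞) ≤ Module.supportDim C N) :
    ∃ q ∈ Module.support C N, (i : WithBot ℕ∞) ≤ ringKrullDim (C ⧸ q.asIdeal) := by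
  obtain ⟨l, hl⟩ := Order.le_krullDim_iff.1 h
  refine ⟨l.head.1, l.head.2, ?_⟩
  rw [ringKrullDim_quotient, Order.le_krullDim_iff]
  refine ⟨⟨l.length, fun j => ⟨(l j).1, ?_⟩, fun j => l.step j⟩, hl⟩
  intro x hx
  exact (LTSeries.head_le l j : l.head ≤ l j) hx

namespace DualTheory

variable {C : Type u} [CommRing C] [IsLocalRing C] [IsNoetherianRing C] (D : DualTheory C)

theorem exists_notMem_avoid (S : Set (Ideal C)) (hS : S.Finite) (hp : ∀ p ∈ S, p.IsPrime)
    (I : Ideal C) (h : ∀ p ∈ S, ¬ I ≤ p) : ∃ u ∈ I, ∀ p ∈ S, u ∉ p := by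
  by_contra hcon
  push Not at hcon
  have := (I.subset_union_prime_finite hS (f := id) 0 0 fun p hp' _ _ => hp p hp').1 (by
    intro x hx
    obtain ⟨p, hp, hxp⟩ := hcon x hx
    exact Set.mem_biUnion hp hxp)
  obtain ⟨p, hp, hIp⟩ := this
  exact h p hp hIp

theorem lt_succ_of_eq {a : WithBot ℕ∞} {e : ℕ} (h : a = e) : a < ((e + 1 : ℕ) : WithBot ℕ∞) := by
  rw [h]; exact_mod_cast Nat.lt_succ_self e

theorem smul_injective_prime {p : Ideal C} (hp : p.IsPrime) (e : ℕ)
    (hdim : Module.supportDim C (C ⧸ p) = (e : WithBot ℕ∞)) {v : C} (hv : v ∉ p)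
    (x : D.G e (C ⧸ p)) (hx : v • x = 0) : x = 0 := by
  by_cases hvm : v ∈ maximalIdeal C
  · have hreg := isSMulRegular_of_equiv_prime hp (LinearEquiv.refl C (C ⧸ p)) hv
    refine D.smul_injective e (C ⧸ p) v (lt_succ_of_eq hdim) ?_ x hx
    have h1 := Module.supportDim_quotSMulTop_succ_eq_supportDim hreg hvm
    exact ENat.WithBot.add_one_le_natCast_iff.1 (by rw [h1, hdim])
  · have hu : IsUnit v := by
      by_contra hnu
      exact hvm ((mem_maximalIdeal v).2 hnu)
    exact (hu.smul_eq_zero).1 hx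

theorem G_nontrivial [IsAdicComplete (maximalIdeal C) C] (e : ℕ) :
    ∀ (p : Ideal C), p.IsPrime → Module.supportDim C (C ⧸ p) = (e : WithBot ℕ∞) →
      Nontrivial (D.G e (C ⧸ p)) := by
  induction e with
  | zero =>
    intro p hp hdim
    have h1 := support_of_supportDim_eq_zero C (C ⧸ p) (by simpa using hdim)
    have hpm : p = maximalIdeal C := by
      have : (⟨p, hp⟩ : PrimeSpectrum C) ∈ Module.support C (C ⧸ p) := by
        rw [Module.mem_support_iff_of_finite, Ideal.annihilator_quotient]
      rw [h1] at this
      exact le_antisymm (le_maximalIdeal hp.ne_top) this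
    rw [hpm]
    exact D.residue_zero_nontrivial
  | succ e ih =>
    intro p hp hdim
    by_contra hcon
    rw [not_nontrivial_iff_subsingleton] at hcon
    have hfin := D.G_finite e (C ⧸ p)
    obtain ⟨u, hu, hu'⟩ := exists_notMem_avoid
      ((associatedPrimes C (D.G e (C ⧸ p)) \ {maximalIdeal C}) ∪ {p})
      (((associatedPrimes.finite C _).subset Set.diff_subset).union (Set.finite_singleton p))
      (by
        rintro q (⟨hq, -⟩ | hq)
        · exact hq.isPrime
        · rw [Set.mem_singleton_iff.1 hq]; exact hp)
      (maximalIdeal C) (by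
        rintro q (⟨hq, hq'⟩ | hq) hle
        · exact hq' (le_antisymm (le_maximalIdeal hq.isPrime.ne_top) hle)
        · rw [Set.mem_singleton_iff.1 hq] at hle
          have hpm : p = maximalIdeal C := le_antisymm (le_maximalIdeal hp.ne_top) hle
          rw [Module.supportDim_quotient_eq_ringKrullDim, hpm] at hdim
          have : ringKrullDim (C ⧸ maximalIdeal C) = 0 :=
            ringKrullDim_eq_zero_of_isField
              ((Ideal.Quotient.maximal_ideal_iff_isField_quotient _).1 inferInstance)
          rw [this] at hdim
          exact absurd hdim (by exact_mod_cast (Nat.succ_ne_zero e).symm))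
    have hup : u ∉ p := hu' p (Or.inr rfl)
    have hreg := isSMulRegular_of_equiv_prime hp (LinearEquiv.refl C (C ⧸ p)) hup
    have hdimu : Module.supportDim C (QuotSMulTop u (C ⧸ p)) = (e : WithBot ℕ∞) := by
      have := Module.supportDim_quotSMulTop_succ_eq_supportDim hreg hu
      rw [hdim, Nat.cast_add, Nat.cast_one] at this
      exact ENat.WithBot.add_one_cancel.1 this
    obtain ⟨q, hq, hqdim⟩ := exists_mem_support_le_ringKrullDim e hdimu.ge
    have hqs := hq
    rw [Module.support_quotSMulTop] at hqs
    have hpq : p ≤ q.asIdeal := by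
      have := Module.mem_support_iff_of_finite.1 hqs.1
      rwa [Ideal.annihilator_quotient] at this
    have huq : u ∈ q.asIdeal := by simpa using hqs.2
    -- the surjection
    let g : QuotSMulTop u (C ⧸ p) →ₗ[C] C ⧸ q.asIdeal :=
      Submodule.liftQ _ (Submodule.factor hpq) (by
        intro x hx
        obtain ⟨y, -, rfl⟩ := (Submodule.mem_smul_pointwise_iff_exists _ _ _).1 hx
        rw [LinearMap.mem_ker, map_smul]
        obtain ⟨z, hz⟩ := Ideal.Quotient.mk_surjective (Submodule.factor hpq y)
        rw [← hz]
        exact Ideal.Quotient.eq_zero_iff_mem.2 (Ideal.mul_mem_right _ _ huq))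
    have hg : Function.Surjective g := by
      intro z
      obtain ⟨z, rfl⟩ := Ideal.Quotient.mk_surjective z
      exact ⟨Submodule.Quotient.mk (Ideal.Quotient.mk p z), rfl⟩
    have hdimq : Module.supportDim C (C ⧸ q.asIdeal) = (e : WithBot ℕ∞) :=
      le_antisymm ((Module.supportDim_le_of_surjective g hg).trans_eq hdimu)
        (by rwa [Module.supportDim_quotient_eq_ringKrullDim])
    have hL := ih q.asIdeal q.2 hdimq
    have hinj1 := D.mp_injective_of_surjective e g hg (lt_succ_of_eq hdimu)
    obtain ⟨δ, h1, h2⟩ := D.delta_smul e u (C ⧸ p) hreg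
    have hinj2 : Function.Injective (D.mp e (Submodule.mkQ (u • (⊤ : Submodule C (C ⧸ p))))) := by
      rw [injective_iff_map_eq_zero]
      intro x hx
      obtain ⟨y, rfl⟩ := (h2 x).1 hx
      rw [Subsingleton.elim y 0, map_zero]
    let j : D.G e (C ⧸ q.asIdeal) →ₗ[C] D.G e (C ⧸ p) :=
      D.mp e (Submodule.mkQ (u • (⊤ : Submodule C (C ⧸ p)))) ∘ₗ D.mp e g
    have hj : Function.Injective j := hinj2.comp hinj1
    obtain ⟨x0, hx0⟩ := exists_ne (0 : D.G e (C ⧸ q.asIdeal))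
    cases e with
    | zero =>
      have hs := D.mp_zero_surjective (u • LinearMap.id : (C ⧸ p) →ₗ[C] (C ⧸ p))
        (fun _ _ h => hreg h)
      rw [mp_smul_id] at hs
      have := D.subsingleton_of_smul_surjective hu 0 (C ⧸ p) hs
      exact hx0 (hj (Subsingleton.elim _ _))
    | succ e =>
      obtain ⟨P, hP, -⟩ := exists_le_isAssociatedPrime_of_isNoetherianRing C x0 hx0
      have hP' := hP.map_of_injective j hj
      obtain ⟨hPp, x, hx⟩ := isAssociatedPrime_iff.1 hP
      have huP : u ∈ P := by
        rw [hx, Submodule.mem_colon_singleton, Submodule.mem_bot]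
        refine D.G_smul_eq_zero _ _ u (fun y => ?_) x
        obtain ⟨y, rfl⟩ := Ideal.Quotient.mk_surjective y
        exact Ideal.Quotient.eq_zero_iff_mem.2 (Ideal.mul_mem_right _ _ huq)
      have hPm : P = maximalIdeal C := by
        by_contra hne
        exact hu' P (Or.inl ⟨hP', hne⟩) huP
      have hqm : q.asIdeal ≠ maximalIdeal C := by
        intro hqm
        rw [Module.supportDim_quotient_eq_ringKrullDim, hqm] at hdimq
        have : ringKrullDim (C ⧸ maximalIdeal C) = 0 :=
          ringKrullDim_eq_zero_of_isField
            ((Ideal.Quotient.maximal_ideal_iff_isField_quotient _).1 inferInstance)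
        rw [this] at hdimq
        exact absurd hdimq (by exact_mod_cast (Nat.succ_ne_zero e).symm)
      obtain ⟨v, hv, hvq⟩ := exists_mem_max_notMem q.2 hqm
      have hvx : v • x = 0 := by
        rw [← hPm, hx, Submodule.mem_colon_singleton, Submodule.mem_bot] at hv
        exact hv
      have hx00 := D.smul_injective_prime q.2 (e + 1) hdimq hvq x hvx
      apply hPp.ne_top
      rw [hx, hx00]
      simp

end DualTheory

/-- The module used in the proof of the theorem. -/
theorem exists_good_module (C : Type u) [CommRing C] [IsLocalRing C] [IsNoetherianRing C]
    [IsAdicComplete (maximalIdeal C) C] (p : Ideal C) (hp : p.IsPrime) (d : ℕ)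
    (hd : ringKrullDim (C ⧸ p) = ((d + 1 : ℕ) : WithBot ℕ∞)) (h z : C) (hh : h ∉ p)
    (hhm : h ∈ maximalIdeal C)
    (hz : ∀ q : Ideal C, q.IsPrime → h ∈ q → z ∈ q → ringKrullDim (C ⧸ q) < (d : WithBot ℕ∞)) :
    ∃ (K : Type u) (_ : AddCommGroup K) (_ : Module C K), Module.Finite C K ∧ Nontrivial K ∧
      (∀ t ∈ p, ∀ x : K, t • x = 0) ∧ (∀ t ∉ p, ∀ x : K, t • x = 0 → x = 0) ∧
      (∀ x y : K, z • x = h • y → ∃ y', x = h • y') := by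
  obtain ⟨D⟩ := exists_dualTheory C
  rw [← Module.supportDim_quotient_eq_ringKrullDim] at hd
  refine ⟨D.G (d + 1) (C ⧸ p), inferInstance, inferInstance, D.G_finite _ _,
    D.G_nontrivial _ p hp hd, ?_, fun t ht x hx => D.smul_injective_prime hp _ hd ht x hx, ?_⟩
  · intro t ht x
    refine D.G_smul_eq_zero _ _ t (fun y => ?_) x
    obtain ⟨y, rfl⟩ := Ideal.Quotient.mk_surjective y
    exact Ideal.Quotient.eq_zero_iff_mem.2 (Ideal.mul_mem_right _ _ ht)
  · intro x y hxy
    have hreg := DualTheory.isSMulRegular_of_equiv_prime hp (LinearEquiv.refl C (C ⧸ p)) hh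
    obtain ⟨δ, h1, h2⟩ := D.delta_smul d h (C ⧸ p) hreg
    have hdim : Module.supportDim C (QuotSMulTop h (C ⧸ p)) = (d : WithBot ℕ∞) := by
      have := Module.supportDim_quotSMulTop_succ_eq_supportDim hreg hhm
      rw [hd, Nat.cast_add, Nat.cast_one] at this
      exact ENat.WithBot.add_one_cancel.1 this
    have hdim' : Module.supportDim C (QuotSMulTop z (QuotSMulTop h (C ⧸ p))) < (d : WithBot ℕ∞) := by
      by_contra hcon
      obtain ⟨q, hq, hqd⟩ := exists_mem_support_le_ringKrullDim d (not_lt.1 hcon)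
      rw [Module.support_quotSMulTop, Module.support_quotSMulTop] at hq
      exact absurd (hz q.asIdeal q.2 (by simpa using hq.1.2) (by simpa using hq.2)) (not_lt.2 hqd)
    have hδ := D.smul_injective d _ z (DualTheory.lt_succ_of_eq hdim) hdim' (δ x) (by
      rw [← map_smul, hxy]
      exact (h1 _).2 ⟨y, rfl⟩)
    obtain ⟨y', hy'⟩ := (h1 x).1 hδ
    exact ⟨y', hy'.symm⟩


/-- equation of integral dependence of `x` over the principal ideal `(h)` -/
def HRel {A : Type*} [CommRing A] (h x : A) : Prop :=
  ∃ n : ℕ, 0 < n ∧ ∃ c : ℕ → A, x ^ n + ∑ i ∈ Finset.Icc 1 n, c i * h ^ i * x ^ (n - i) = 0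

theorem HRel.map {A C : Type*} [CommRing A] [CommRing C] (f : A →+* C) {h x : A} (H : HRel h x) :
    HRel (f h) (f x) := by
  obtain ⟨n, hn, c, hc⟩ := H
  refine ⟨n, hn, fun i => f (c i), ?_⟩
  have := congrArg f hc
  simpa [map_add, map_sum, map_mul, map_pow] using this

theorem HRel.dvd {A : Type*} [CommRing A] {h w : A} (H : HRel h w) :
    ∃ n, ∀ i, h ^ i ∣ w ^ i * h ^ n := by
  obtain ⟨n, hn, c, hc⟩ := H
  refine ⟨n, fun i => ?_⟩
  induction i using Nat.strong_induction_on with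
  | _ i ih =>
  by_cases hi : i ≤ n
  · exact (pow_dvd_pow h hi).mul_left _
  · push Not at hi
    have h1 : w ^ i * h ^ n = - ∑ j ∈ Finset.Icc 1 n, c j * h ^ j * (w ^ (i - j) * h ^ n) := by
      have h2 : w ^ i = w ^ n * w ^ (i - n) := by rw [← pow_add]; congr 1; omega
      rw [h2, eq_neg_of_add_eq_zero_left hc, neg_mul, neg_mul, Finset.sum_mul, Finset.sum_mul]
      congr 1
      refine Finset.sum_congr rfl fun j hj => ?_
      have : i - j = (n - j) + (i - n) := by
        have := (Finset.mem_Icc.1 hj).2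
        omega
      rw [this, pow_add]
      ring
    rw [h1, dvd_neg]
    refine Finset.dvd_sum fun j hj => ?_
    obtain ⟨hj1, hj2⟩ := Finset.mem_Icc.1 hj
    have h3 : h ^ i = h ^ j * h ^ (i - j) := by rw [← pow_add]; congr 1; omega
    rw [h3]
    exact mul_dvd_mul (Dvd.intro_left _ rfl) (ih (i - j) (by omega))

/-- `f = a ^ M + e` with `e` of higher `h`-order -/
def TopForm {C : Type*} [CommRing C] (h a : C) (M : ℕ) (f : C) : Prop :=
  0 < M ∧ f - a ^ M ∈ Ideal.span {h} * Ideal.span {a, h} ^ (M - 1)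

theorem TopForm.mul {C : Type*} [CommRing C] {h a : C} {M N : ℕ} {f g : C}
    (hf : TopForm h a M f) (hg : TopForm h a N g) : TopForm h a (M + N) (f * g) := by
  obtain ⟨hM, hf⟩ := hf
  obtain ⟨hN, hg⟩ := hg
  refine ⟨by omega, ?_⟩
  have ha : a ∈ Ideal.span {a, h} := Ideal.subset_span (by simp)
  have hle : Ideal.span {h} ≤ Ideal.span {a, h} := Ideal.span_mono (by simp)
  have h1 : f * g - a ^ (M + N) = (f - a ^ M) * g + (g - a ^ N) * a ^ M := by ring
  have hga : g ∈ Ideal.span {a, h} ^ N := by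
    have h2 : g - a ^ N ∈ Ideal.span {a, h} ^ N := by
      have h3 : Ideal.span {h} * Ideal.span {a, h} ^ (N - 1) ≤ Ideal.span {a, h} ^ N := by
        refine (Ideal.mul_mono_left hle).trans_eq ?_
        rw [← pow_succ']
        congr 1; omega
      exact h3 hg
    have := Ideal.add_mem _ h2 (Ideal.pow_mem_pow ha N)
    rwa [sub_add_cancel] at this
  rw [h1]
  refine Ideal.add_mem _ ?_ ?_
  · have := Ideal.mul_mem_mul hf hga
    rw [mul_assoc, ← pow_add] at this
    have e : M - 1 + N = M + N - 1 := by omega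
    rwa [e] at this
  · have := Ideal.mul_mem_mul hg (Ideal.pow_mem_pow ha M)
    rw [mul_assoc, ← pow_add] at this
    have e : N - 1 + M = M + N - 1 := by omega
    rwa [e] at this

theorem TopForm.pow {C : Type*} [CommRing C] {h a : C} {M : ℕ} {f : C}
    (hf : TopForm h a M f) (k : ℕ) : TopForm h a (M * (k + 1)) (f ^ (k + 1)) := by
  induction k with
  | zero => simpa using hf
  | succ k ih =>
    have := ih.mul hf
    rw [pow_succ f (k + 1)]
    have e : M * (k + 1 + 1) = M * (k + 1) + M := by ring
    rwa [e]

theorem exists_expansion {A : Type*} [CommRing A] (h a : A) (m : ℕ) (x : A)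
    (hx : x ∈ Ideal.span {h} * Ideal.span {a, h} ^ m) :
    ∃ c : ℕ → A, x = ∑ i ∈ Finset.Icc 1 (m + 1), c i * h ^ i * a ^ (m + 1 - i) := by
  have key : ∀ m : ℕ, Ideal.span {h} * Ideal.span {a, h} ^ m ≤
      Ideal.span ((fun i => h ^ i * a ^ (m + 1 - i)) '' (Finset.Icc 1 (m + 1) : Finset ℕ)) := by
    intro m
    induction m with
    | zero => simp
    | succ m ih =>
      rw [pow_succ, ← mul_assoc]
      refine (Ideal.mul_mono_left ih).trans ?_
      rw [Ideal.span_mul_span', Ideal.span_le]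
      rintro _ ⟨_, ⟨i, hi, rfl⟩, y, hy, rfl⟩
      obtain ⟨hi1, hi2⟩ := Finset.mem_Icc.1 (Finset.mem_coe.1 hi)
      rcases hy with rfl | hy
      · refine Ideal.subset_span ⟨i, Finset.mem_coe.2 (Finset.mem_Icc.2 ⟨hi1, by omega⟩), ?_⟩
        have : m + 1 + 1 - i = (m + 1 - i) + 1 := by omega
        simp only [this, pow_succ]
        ring
      · rw [Set.mem_singleton_iff.1 hy]
        refine Ideal.subset_span ⟨i + 1, Finset.mem_coe.2 (Finset.mem_Icc.2 ⟨by omega, by omega⟩), ?_⟩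
        have : m + 1 + 1 - (i + 1) = (m + 1 - i) := by omega
        simp only [this, pow_succ]
        ring
  obtain ⟨c, hc⟩ := (Submodule.mem_span_image_finset_iff_exists_fun' A).1 (key m hx)
  refine ⟨c, ?_⟩
  rw [← hc]
  exact Finset.sum_congr rfl fun i _ => by rw [smul_eq_mul, mul_assoc]

theorem HRel_of_mem {A : Type*} [CommRing A] {h a : A} {M : ℕ} (hM : 0 < M)
    (hx : a ^ M ∈ Ideal.span {h} * Ideal.span {a, h} ^ (M - 1)) : HRel h a := by
  obtain ⟨c, hc⟩ := exists_expansion h a (M - 1) _ hx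
  rw [Nat.sub_add_cancel hM] at hc
  refine ⟨M, hM, fun i => - c i, ?_⟩
  simp only [neg_mul, Finset.sum_neg_distrib]
  rw [← hc, add_neg_cancel]

/-- the determinant trick on the good module -/
theorem exists_topForm {C : Type u} [CommRing C] [IsNoetherianRing C] (p : Ideal C)
    (hp : p.IsPrime) (h z a : C) (hh : h ∉ p) (K : Type u) [AddCommGroup K] [Module C K]
    [Module.Finite C K] [Nontrivial K]
    (htf : ∀ t ∉ p, ∀ x : K, t • x = 0 → x = 0)
    (hz : ∀ x y : K, z • x = h • y → ∃ y', x = h • y') (hrel : HRel h (z * a)) :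
    ∃ M f, TopForm h a M f ∧ f ∈ p := by
  have hinj : ∀ x y : K, h • x = h • y → x = y := by
    intro x y hxy
    rw [← sub_eq_zero] at hxy ⊢
    exact htf h hh _ (by rw [smul_sub, hxy])
  have hz' : ∀ i : ℕ, ∀ x y : K, z • x = h ^ i • y → ∃ y', x = h ^ i • y' := by
    intro i
    induction i with
    | zero => intro x y _; exact ⟨x, by simp⟩
    | succ i ih =>
      intro x y hxy
      rw [pow_succ', mul_smul] at hxy
      obtain ⟨x1, rfl⟩ := hz _ _ hxy
      rw [smul_comm] at hxy
      obtain ⟨y', rfl⟩ := ih _ _ (hinj _ _ hxy)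
      exact ⟨y', by rw [pow_succ', mul_smul]⟩
  let K' : Submodule C K :=
    { carrier := {κ | ∀ i : ℕ, ∃ y, (z * a) ^ i • κ = h ^ i • y}
      add_mem' := by
        intro x y hx hy i
        obtain ⟨x', hx'⟩ := hx i
        obtain ⟨y', hy'⟩ := hy i
        exact ⟨x' + y', by rw [smul_add, smul_add, hx', hy']⟩
      zero_mem' := fun i => ⟨0, by simp⟩
      smul_mem' := by
        intro c x hx i
        obtain ⟨x', hx'⟩ := hx i
        exact ⟨c • x', by rw [smul_comm, hx', smul_comm]⟩ }
  obtain ⟨n, hn⟩ := hrel.dvd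
  have hK' : ∀ x : K, h ^ n • x ∈ K' := by
    intro x i
    obtain ⟨c, hc⟩ := hn i
    exact ⟨c • x, by rw [smul_smul, hc, mul_smul]⟩
  obtain ⟨x0, hx0⟩ := exists_ne (0 : K)
  have hx0' : h ^ n • x0 ≠ 0 := fun h0 => hx0 (htf (h ^ n) (fun hm => hh (hp.mem_of_pow_mem n hm)) _ h0)
  have haK : ∀ κ ∈ K', ∃ y ∈ K', a • κ = h • y := by
    intro κ hκ
    have h1 : ∀ i : ℕ, ∃ y, (z * a) ^ i • a • κ = h ^ (i + 1) • y := by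
      intro i
      obtain ⟨y, hy⟩ := hκ (i + 1)
      refine hz' (i + 1) _ y ?_
      rw [← hy, smul_smul, smul_smul]
      congr 1
      ring
    obtain ⟨y, hy⟩ := h1 0
    rw [pow_zero, one_smul, zero_add, pow_one] at hy
    refine ⟨y, fun i => ?_, hy⟩
    obtain ⟨y', hy'⟩ := h1 i
    refine ⟨y', hinj _ _ ?_⟩
    rw [smul_comm, ← hy, hy', pow_succ', mul_smul]
  let φ : Module.End C K' := algebraMap C _ a
  obtain ⟨q, hq, -, hqc, hq0⟩ :=
    LinearMap.exists_monic_and_natDegree_eq_and_coeff_mem_pow_and_aeval_eq_zero C φ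
      (Ideal.span {h}) (by
        rintro _ ⟨⟨κ, hκ⟩, rfl⟩
        obtain ⟨y, hy, hyy⟩ := haK κ hκ
        have : φ ⟨κ, hκ⟩ = h • (⟨y, hy⟩ : K') := Subtype.ext hyy
        rw [this]
        exact Submodule.smul_mem_smul (Ideal.mem_span_singleton_self h) trivial)
  have hev : Polynomial.eval a q ∈ p := by
    by_contra hcon
    rw [Polynomial.aeval_algebraMap_apply] at hq0
    have := LinearMap.congr_fun hq0 ⟨h ^ n • x0, hK' x0⟩
    have h2 : (Polynomial.eval a q) • (h ^ n • x0) = 0 := by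
      have h3 := congrArg Subtype.val this
      simpa [Module.algebraMap_end_apply] using h3
    exact hx0' (htf _ hcon _ h2)
  have hdeg : 0 < q.natDegree := by
    rw [Nat.pos_iff_ne_zero]
    intro h0
    rw [hq.natDegree_eq_zero.1 h0, Polynomial.eval_one] at hev
    exact hp.ne_top ((Ideal.eq_top_iff_one p).2 hev)
  refine ⟨q.natDegree, Polynomial.eval a q, ⟨hdeg, ?_⟩, hev⟩
  rw [Polynomial.eval_eq_sum_range, Finset.sum_range_succ, hq.coeff_natDegree, one_mul,
    add_sub_cancel_right]
  refine Ideal.sum_mem _ fun k hk => ?_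
  have hk' := Finset.mem_range.1 hk
  have h1 := hqc k
  have e1 : q.natDegree - k = (q.natDegree - k - 1) + 1 := by omega
  rw [e1, pow_succ'] at h1
  have ha : a ∈ Ideal.span {a, h} := Ideal.subset_span (by simp)
  have hle : Ideal.span {h} ≤ Ideal.span {a, h} := Ideal.span_mono (by simp)
  have h2 := Ideal.mul_mem_mul (Ideal.mul_mono_right (Ideal.pow_right_mono hle _) h1)
    (Ideal.pow_mem_pow ha k)
  rw [mul_assoc, ← pow_add] at h2
  have e2 : q.natDegree - k - 1 + k = q.natDegree - 1 := by omega
  rwa [e2] at h2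

theorem exists_topForm_all {C : Type u} [CommRing C] [IsNoetherianRing C] [Nontrivial C] (h a : C)
    (H : ∀ p ∈ minimalPrimes C, ∃ M f, TopForm h a M f ∧ f ∈ p) :
    ∃ M, 0 < M ∧ a ^ M ∈ Ideal.span {h} * Ideal.span {a, h} ^ (M - 1) := by
  have hfin : (minimalPrimes C).Finite := minimalPrimes.finite_of_isNoetherianRing C
  have key : ∀ s : Finset (Ideal C), (s : Set (Ideal C)) ⊆ minimalPrimes C →
      ∃ M f, TopForm h a M f ∧ ∀ p ∈ s, f ∈ p := by
    intro s
    classical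
    induction s using Finset.induction_on with
    | empty => intro _; exact ⟨1, a, ⟨one_pos, by simp⟩, by simp⟩
    | insert p s hps ih =>
      intro hs
      obtain ⟨M, f, hf, hf'⟩ := ih (fun x hx => hs (by simp [Finset.mem_coe.1 hx]))
      obtain ⟨N, g, hg, hg'⟩ := H p (hs (by simp))
      refine ⟨M + N, f * g, hf.mul hg, fun q hq => ?_⟩
      rcases Finset.mem_insert.1 hq with rfl | hq
      · exact Ideal.mul_mem_left _ _ hg'
      · exact Ideal.mul_mem_right _ _ (hf' q hq)
  obtain ⟨M, f, hf, hf'⟩ := key hfin.toFinset (by simp)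
  have hnil : IsNilpotent f := by
    rw [← mem_nilradical, nilradical, ← Ideal.sInf_minimalPrimes, Ideal.mem_sInf]
    intro p hp
    exact hf' p (hfin.mem_toFinset.2 hp)
  obtain ⟨k, hk⟩ := hnil
  obtain ⟨h1, h2⟩ := hf.pow k
  rw [pow_succ, hk, zero_mul, zero_sub] at h2
  exact ⟨_, h1, by simpa using h2⟩


theorem ringKrullDim_quotient_lt_prime {C : Type u} [CommRing C] {p q : Ideal C} (hp : p.IsPrime)
    (hpq : p < q) : ringKrullDim (C ⧸ q) + 1 ≤ ringKrullDim (C ⧸ p) := by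
  obtain ⟨r, hr, hrp⟩ := SetLike.exists_of_lt hpq
  refine ringKrullDim_succ_le_of_surjective (Ideal.Quotient.factor hpq.le)
    (Ideal.Quotient.factor_surjective hpq.le) (r := Ideal.Quotient.mk p r) ?_ ?_
  · rw [mem_nonZeroDivisors_iff_ne_zero]
    intro h0
    exact hrp (Ideal.Quotient.eq_zero_iff_mem.1 h0)
  · rw [Ideal.Quotient.factor_mk]
    exact Ideal.Quotient.eq_zero_iff_mem.2 hr

theorem HRel_key (A : Type u) [CommRing A] [IsNoetherianRing A] [IsLocalRing A]
    (hfeq : IsEquidimensionalRing (AdicCompletion (maximalIdeal A) A))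
    (h : A) (hreg : h ∈ nonZeroDivisors A) (P P0 : Ideal A) (hP : P.IsPrime) (hP0 : P0.IsPrime)
    (hlt : P0 < P) (hhP : h ∈ P0) (a : A) (ha : ∀ z ∈ P, HRel h (z * a)) : HRel h a := by
  let C := AdicCompletion (maximalIdeal A) A
  have hnoeth : IsNoetherianRing C := isNoetherianRing_adicCompletion A
  have hflat : Module.Flat A C := inferInstance
  have hff : Module.FaithfullyFlat A C := Module.FaithfullyFlat.of_flat_of_isLocalHom
  let φ : A →+* C := algebraMap A C
  have hhm : h ∈ maximalIdeal A := le_maximalIdeal hP0.ne_top hhP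
  have hhm' : φ h ∈ maximalIdeal C := by
    rw [mem_maximalIdeal, mem_nonunits_iff]
    intro hu
    exact (mem_maximalIdeal h).1 hhm (isUnit_of_map_unit φ h hu)
  have hreg' : φ h ∈ nonZeroDivisors C := by
    have h1 : IsSMulRegular A h := by
      intro x y hxy
      have h2 : h * x = h * y := hxy
      exact (mul_cancel_left_mem_nonZeroDivisors hreg).1 h2
    have h2 : IsSMulRegular C (φ h) := IsSMulRegular.of_flat h1
    rw [mem_nonZeroDivisors_iff_right]
    intro x hx
    apply h2
    show φ h * x = φ h * 0
    rw [mul_comm, hx, mul_zero]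
  have hmin : ∀ p ∈ minimalPrimes C, φ h ∉ p := fun p hp hhp =>
    notMem_nonZeroDivisors_of_mem_mem_minimalPrimes hhp hp hreg'
  -- choice of z
  obtain ⟨z, hzP, hz⟩ := DualTheory.exists_notMem_avoid
    ((fun Q : Ideal C => Q.comap φ) '' (Ideal.span {φ h}).minimalPrimes)
    ((Ideal.finite_minimalPrimes_of_isNoetherianRing C _).image _)
    (by
      rintro _ ⟨Q, hQ, rfl⟩
      have : Q.IsPrime := hQ.1.1
      exact Ideal.comap_isPrime φ Q)
    P (by
      rintro _ ⟨Q, hQ, rfl⟩ hle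
      have hQp : Q.IsPrime := hQ.1.1
      have : Q.LiesOver (Q.comap φ) := ⟨rfl⟩
      have : (Q.comap φ).IsPrime := Ideal.comap_isPrime φ Q
      obtain ⟨Q0, hQ0, hQ0p, hQ0o⟩ := Ideal.exists_ideal_lt_liesOver_of_lt Q (hlt.trans_le hle)
      have hmem : φ h ∈ Q0 := by
        have h1 := hhP
        rw [hQ0o.over] at h1
        exact h1
      exact hQ0.not_ge (hQ.2 ⟨hQ0p, (Ideal.span_singleton_le_iff_mem _).2 hmem⟩ hQ0.le))
  obtain ⟨n, hn⟩ : ∃ n : ℕ, ringKrullDim C = (n : WithBot ℕ∞) := by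
    have h1 : ringKrullDim C ≠ ⊥ := ringKrullDim_ne_bot
    obtain ⟨m, hm⟩ := WithBot.ne_bot_iff_exists.1 h1
    have h2 : m ≠ ⊤ := by
      rintro rfl
      have := hfeq.1
      rw [show ringKrullDim (AdicCompletion (maximalIdeal A) A) = _ from hm.symm] at this
      exact absurd this (lt_irrefl _)
    obtain ⟨n, rfl⟩ := ENat.ne_top_iff_exists.1 h2
    exact ⟨n, hm.symm⟩
  obtain ⟨M, hM, hmem⟩ := exists_topForm_all (φ h) (φ a) (by
    intro p hp
    have hpp : p.IsPrime := hp.1.1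
    have hdp : ringKrullDim (C ⧸ p) = (n : WithBot ℕ∞) := (hfeq.2 p hp).trans hn
    have hpm : p < maximalIdeal C := by
      refine lt_of_le_of_ne (le_maximalIdeal hpp.ne_top) ?_
      intro he
      exact hmin p hp (he ▸ hhm')
    obtain ⟨d, rfl⟩ : ∃ d, n = d + 1 := by
      refine Nat.exists_eq_succ_of_ne_zero ?_
      rintro rfl
      have h1 := ringKrullDim_quotient_lt_prime hpp hpm
      rw [hdp, Nat.cast_zero, ENat.WithBot.add_one_le_zero_iff] at h1
      have : Nontrivial (C ⧸ maximalIdeal C) := Ideal.Quotient.nontrivial_iff.2 Ideal.IsPrime.ne_top'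
      have h2 := ringKrullDim_nonneg_of_nontrivial (R := C ⧸ maximalIdeal C)
      rw [h1] at h2
      exact absurd h2 (by simp)
    obtain ⟨K, _, _, hKf, hKn, -, hK1, hK2⟩ := exists_good_module C p hpp d hdp (φ h) (φ z)
      (hmin p hp) hhm' (by
        intro q hq hhq hzq
        obtain ⟨Q, hQ, hQq⟩ := Ideal.exists_minimalPrimes_le
          ((Ideal.span_singleton_le_iff_mem q).2 hhq)
        have hQp : Q.IsPrime := hQ.1.1
        have hzQ : φ z ∉ Q := hz _ ⟨Q, hQ, rfl⟩
        have hQq' : Q < q := lt_of_le_of_ne hQq (fun he => hzQ (he ▸ hzq))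
        have hhQ : φ h ∈ Q := hQ.1.2 (Ideal.mem_span_singleton_self _)
        obtain ⟨p', hp', hpQ⟩ := Ideal.exists_minimalPrimes_le (bot_le : (⊥ : Ideal C) ≤ Q)
        have hp'' : p' ∈ minimalPrimes C := hp'
        have hpQ' : p' < Q := lt_of_le_of_ne hpQ (fun he => hmin p' hp'' (he ▸ hhQ))
        have h1 := ringKrullDim_quotient_lt_prime hp'.1.1 hpQ'
        have h2 := ringKrullDim_quotient_lt_prime hQp hQq'
        rw [show ringKrullDim (C ⧸ p') = _ from (hfeq.2 p' hp'').trans hn, Nat.cast_add,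
          Nat.cast_one, ENat.WithBot.add_le_add_one_right_iff] at h1
        exact ENat.WithBot.add_one_le_natCast_iff.1 (h2.trans h1))
    have hrel := (ha z hzP).map φ
    rw [map_mul] at hrel
    exact exists_topForm p hpp (φ h) (φ z) (φ a) (hmin p hp) K hK1 hK2 hrel)
  refine HRel_of_mem hM ?_
  rw [← Ideal.comap_map_eq_self_of_faithfullyFlat (B := C)
    (Ideal.span {h} * Ideal.span {a, h} ^ (M - 1)), Ideal.mem_comap, Ideal.map_mul, Ideal.map_pow,
    Ideal.map_span, Ideal.map_span, Set.image_singleton, Set.image_pair, map_pow]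
  exact hmem

theorem mem_comap_iff_HRel (A : Type u) [CommRing A] [Nontrivial A] (h : A)
    (hreg : h ∈ nonZeroDivisors A) (K : Type v) [CommRing K] [Algebra A K] [IsFractionRing A K] (x : A) :
    x ∈ Submodule.comap (Algebra.linearMap A K)
          (algebraMap A K h • Subalgebra.toSubmodule (integralClosure A K)) ↔ HRel h x := by
  rw [Submodule.mem_comap, Submodule.mem_smul_pointwise_iff_exists]
  have hinj : Function.Injective (algebraMap A K) := IsFractionRing.injective A K
  constructor
  · rintro ⟨b, hb, hbx⟩
    have hb' : IsIntegral A b := hb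
    obtain ⟨f0, hf0m, hf00⟩ := hb'
    obtain ⟨f, hfm, hf0, hfd⟩ : ∃ f : Polynomial A, f.Monic ∧ Polynomial.aeval b f = 0 ∧
        0 < f.natDegree := by
      refine ⟨f0 * Polynomial.X, hf0m.mul Polynomial.monic_X, ?_, ?_⟩
      · rw [map_mul, Polynomial.aeval_def, hf00, zero_mul]
      · rw [hf0m.natDegree_mul Polynomial.monic_X, Polynomial.natDegree_X]; omega
    have h1 := Polynomial.scaleRoots_aeval_eq_zero (r := h) hf0
    have hbx' : algebraMap A K h * b = algebraMap A K x := hbx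
    rw [hbx', Polynomial.aeval_algebraMap_apply, map_eq_zero_iff _ hinj] at h1
    refine ⟨f.natDegree, hfd, fun i => f.coeff (f.natDegree - i), ?_⟩
    rw [Polynomial.coe_aeval_eq_eval, Polynomial.eval_eq_sum_range, Polynomial.natDegree_scaleRoots,
      Finset.sum_range_succ] at h1
    rw [← h1, add_comm]
    congr 1
    · refine Finset.sum_nbij' (fun i => f.natDegree - i) (fun j => f.natDegree - j) ?_ ?_ ?_ ?_ ?_
      · intro i hi
        have := Finset.mem_Icc.1 hi
        exact Finset.mem_range.2 (by omega)
      · intro i hi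
        have := Finset.mem_range.1 hi
        exact Finset.mem_Icc.2 (by omega)
      · intro i hi
        have := Finset.mem_Icc.1 hi
        show f.natDegree - (f.natDegree - i) = i
        omega
      · intro i hi
        have := Finset.mem_range.1 hi
        show f.natDegree - (f.natDegree - i) = i
        omega
      · intro i hi
        have := Finset.mem_Icc.1 hi
        have e : f.natDegree - (f.natDegree - i) = i := by omega
        simp only [Polynomial.coeff_scaleRoots, e]
    · simp [Polynomial.coeff_scaleRoots, hfm.coeff_natDegree]
  · rintro ⟨n, hn, c, hc⟩
    have hu : IsUnit (algebraMap A K h) := IsLocalization.map_units K ⟨h, hreg⟩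
    obtain ⟨g, hg⟩ := hu.exists_right_inv
    have hy : algebraMap A K h * (g * algebraMap A K x) = algebraMap A K x := by
      rw [← mul_assoc, hg, one_mul]
    set y : K := g * algebraMap A K x with hydef
    refine ⟨y, ?_, hy⟩
    show IsIntegral A y
    refine ⟨Polynomial.X ^ n + ∑ i ∈ Finset.Icc 1 n, Polynomial.C (c i) * Polynomial.X ^ (n - i),
      Polynomial.monic_X_pow_add ?_, ?_⟩
    · refine Polynomial.mem_degreeLT.1 (Submodule.sum_mem _ fun i hi => ?_)
      rw [Polynomial.mem_degreeLT]
      have := Finset.mem_Icc.1 hi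
      refine (Polynomial.degree_C_mul_X_pow_le _ _).trans_lt ?_
      exact_mod_cast (by omega : n - i < n)
    · apply (hu.pow n).mul_left_cancel
      rw [mul_zero, ← map_zero (algebraMap A K), ← hc, Polynomial.eval₂_add, Polynomial.eval₂_X_pow,
        Polynomial.eval₂_finset_sum, map_add, map_sum, mul_add, ← mul_pow, hy, map_pow,
        Finset.mul_sum]
      congr 1
      refine Finset.sum_congr rfl fun i hi => ?_
      have := Finset.mem_Icc.1 hi
      rw [Polynomial.eval₂_mul, Polynomial.eval₂_C, Polynomial.eval₂_X_pow, map_mul, map_mul,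
        map_pow, map_pow, ← hy, mul_pow]
      have e : n = i + (n - i) := by omega
      nth_rewrite 1 [e]
      rw [pow_add]
      ring

theorem mem_integralClosureOfIdeal_of_HRel {A : Type u} [CommRing A] {h x : A} :
    HRel h x ↔ ∃ n : ℕ, 0 < n ∧ ∃ a : ℕ → A,
      (∀ i, 1 ≤ i → i ≤ n → a i ∈ (Ideal.span {h} : Ideal A) ^ i) ∧
      x ^ n + ∑ i ∈ Finset.Icc 1 n, a i * x ^ (n - i) = 0 := by
  constructor
  · rintro ⟨n, hn, c, hc⟩
    refine ⟨n, hn, fun i => c i * h ^ i, fun i _ _ => ?_, hc⟩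
    exact Ideal.mul_mem_left _ _ (Ideal.pow_mem_pow (Ideal.mem_span_singleton_self h) i)
  · rintro ⟨n, hn, a, ha, hc⟩
    have : ∀ i, ∃ c, 1 ≤ i → i ≤ n → a i = c * h ^ i := by
      intro i
      by_cases hi : 1 ≤ i ∧ i ≤ n
      · have h1 := ha i hi.1 hi.2
        rw [Ideal.span_singleton_pow, Ideal.mem_span_singleton'] at h1
        obtain ⟨c, hc⟩ := h1
        exact ⟨c, fun _ _ => hc.symm⟩
      · exact ⟨0, fun h1 h2 => absurd ⟨h1, h2⟩ hi⟩
    choose c hc' using this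
    refine ⟨n, hn, c, ?_⟩
    rw [← hc]
    congr 1
    refine Finset.sum_congr rfl fun i hi => ?_
    obtain ⟨h1, h2⟩ := Finset.mem_Icc.1 hi
    rw [hc' i h1 h2]

theorem integralClosureOfIdeal_eq (A : Type u) [CommRing A] [Nontrivial A] (h : A)
    (hreg : h ∈ nonZeroDivisors A) (K : Type v) [CommRing K] [Algebra A K] [IsFractionRing A K] :
    (Ideal.span {h} : Ideal A).integralClosureOfIdeal = Submodule.comap (Algebra.linearMap A K)
          (algebraMap A K h • Subalgebra.toSubmodule (integralClosure A K)) := by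
  apply le_antisymm
  · refine Ideal.span_le.2 fun x hx => ?_
    exact (mem_comap_iff_HRel A h hreg K x).2 (mem_integralClosureOfIdeal_of_HRel.2 hx)
  · intro x hx
    exact Ideal.subset_span
      (mem_integralClosureOfIdeal_of_HRel.1 ((mem_comap_iff_HRel A h hreg K x).1 hx))

theorem associated_prime_aux
    (A : Type u) [CommRing A] [IsNoetherianRing A] [IsLocalRing A]
    (hfeq : IsEquidimensionalRing (AdicCompletion (maximalIdeal A) A))
    (h : A) (hreg : h ∈ nonZeroDivisors A) (J : Ideal A) (hJ : ∀ x, x ∈ J ↔ HRel h x)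
    (P : Ideal A) (hP : IsAssociatedPrime P (A ⧸ J)) :
    P ∈ (Ideal.span {h} : Ideal A).minimalPrimes := by
  obtain ⟨hPp, a, ha⟩ := isAssociatedPrime_iff.1 hP
  obtain ⟨a, rfl⟩ := Ideal.Quotient.mk_surjective a
  have hmem : ∀ r, r ∈ P ↔ r * a ∈ J := by
    intro r
    rw [ha, Submodule.mem_colon_singleton, Submodule.mem_bot]
    exact Ideal.Quotient.eq_zero_iff_mem (I := J) (a := r * a)
  have hhJ : h ∈ J := by
    rw [hJ]
    exact ⟨1, one_pos, fun _ => -1, by simp⟩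
  have hhP : h ∈ P := (hmem h).2 (Ideal.mul_mem_right _ _ hhJ)
  obtain ⟨P0, hP0, hle⟩ := Ideal.exists_minimalPrimes_le
    ((Ideal.span_singleton_le_iff_mem P).2 hhP)
  rcases hle.lt_or_eq with hlt | rfl
  · exfalso
    have h1 := HRel_key A hfeq h hreg P P0 hPp hP0.1.1 hlt
      (hP0.1.2 (Ideal.mem_span_singleton_self h)) a (fun z hz => (hJ _).1 ((hmem z).1 hz))
    apply hPp.ne_top
    rw [Ideal.eq_top_iff_one, hmem, one_mul, hJ]
    exact h1
  · exact hP0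

theorem associated_primes_of_integral_closure_of_principal
    (A : Type u) [CommRing A] [IsNoetherianRing A] [IsLocalRing A]
    (hfeq : IsEquidimensionalRing (AdicCompletion (maximalIdeal A) A))
    (h : A) (hreg : h ∈ nonZeroDivisors A)
    (K : Type v) [CommRing K] [Algebra A K] [IsFractionRing A K]
    [IsReduced A] [Module.Finite A (integralClosure A K)] :
    (∀ P : Ideal A,
      IsAssociatedPrime P (A ⧸ (Ideal.span {h} : Ideal A).integralClosureOfIdeal) →
      P ∈ (Ideal.span {h} : Ideal A).minimalPrimes) ∧
    (∀ P : Ideal A,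
      IsAssociatedPrime P
        (A ⧸ Submodule.comap (Algebra.linearMap A K)
          (algebraMap A K h • Subalgebra.toSubmodule (integralClosure A K))) →
      P ∈ (Ideal.span {h} : Ideal A).minimalPrimes) := by
  refine ⟨fun P hP => associated_prime_aux A hfeq h hreg _ (fun x => ?_) P hP,
    fun P hP => associated_prime_aux A hfeq h hreg _ (fun x => ?_) P hP⟩
  · rw [integralClosureOfIdeal_eq A h hreg K]
    exact mem_comap_iff_HRel A h hreg K x
  · exact mem_comap_iff_HRel A h hreg K x
end
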